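/- arXiv:2006.10401 — 5 statements merged into one kernel-verified Lean document; each statement's English description precedes it below -/
import Mathlib

section
/- Let ℓ : (0,∞) → (0,∞) be a locally bounded function that is slowly varying at infinity, let q be a function of class 𝒬, and fix a constant a with 0 < a < 1. Then lim_{t→∞} [∫₀^{a q(t)} y^{q(t)−1} e^{−y} ℓ(t/y) dy] / [Γ(q(t)) ℓ(t/q(t))] = 0. -/
open MeasureTheory Set Filter Real

/-!
In the additive variables `h(x) = log ℓ(eˣ)`, slow variation says `h(x + u) - h(x) → 0` for each
`u`. For measurable `h` the convergence also holds in measure in `u`, so for large `x` and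
`c ∈ [0, b]` most `w` satisfy `h(x + w) ≈ h(x)` and `h(x + w) ≈ h(x + c)` simultaneously; any such
`w` shows `h(x + c) ≈ h(x)`. Iterating unit steps gives the Potter bound
`ℓ(t/y) ≤ 2 (q/y) ℓ(t/q)` for `y ≤ q`, which reduces the claim to a Chernoff estimate for the lower
incomplete Gamma function: the quotient is at most `(4/a) (a e^(1-a))^q`, and `a e^(1-a) < 1`.

Measurability of `ℓ` near infinity follows as soon as the integrand is integrable for one `t` with
`t, q(t) > 0`; otherwise all these integrals take the junk value `0`.
-/

open scoped Topology

section UniformConvergence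

variable {E : Type*} [SeminormedAddCommGroup E] {h : ℝ → E} {X : ℝ}

lemma tendstoInMeasure_add_sub (hmeas : AEStronglyMeasurable h (volume.restrict (Ici X)))
    (hlim : ∀ u, Tendsto (fun x => h (x + u) - h x) atTop (𝓝 0)) (b : ℝ) :
    TendstoInMeasure (volume.restrict (Icc 0 b)) (fun x u => h (x + u) - h x) atTop 0 := by
  have hmax : TendstoInMeasure (volume.restrict (Icc 0 b))
      (fun x u => h (max x X + u) - h (max x X)) atTop 0 := by
    intro ε hε
    refine tendsto_of_seq_tendsto fun x hx => ?_
    refine tendstoInMeasure_of_tendsto_ae (fun n => ?_) (ae_of_all _ fun u => ?_) ε hε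
    · have hshift : Measure.QuasiMeasurePreserving (fun u => max (x n) X + u)
          (volume.restrict (Icc 0 b)) (volume.restrict (Ici X)) :=
        (measurePreserving_add_left volume _).quasiMeasurePreserving.restrict
          fun u hu => (le_max_right (x n) X).trans (le_add_of_nonneg_right hu.1)
      exact (hmeas.comp_quasiMeasurePreserving hshift).sub aestronglyMeasurable_const
    · exact (hlim u).comp (tendsto_atTop_mono (fun n => le_max_left (x n) X) hx)
  refine hmax.congr' ?_ (ae_eq_refl 0)
  filter_upwards [eventually_ge_atTop X] with x hx
  rw [max_eq_left hx]

lemma tendstoUniformlyOn_add_sub (hmeas : AEStronglyMeasurable h (volume.restrict (Ici X)))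
    (hlim : ∀ u, Tendsto (fun x => h (x + u) - h x) atTop (𝓝 0)) (b : ℝ) :
    TendstoUniformlyOn (fun x u => h (x + u) - h x) 0 atTop (Icc 0 b) := by
  rw [Metric.tendstoUniformlyOn_iff]
  intro ε hε
  set bad : ℝ → Set ℝ := fun x => {u | ε / 2 ≤ ‖h (x + u) - h x‖} ∩ Icc 0 (b + 1)
  have hbad_small : ∀ᶠ x in atTop, volume (bad x) < ENNReal.ofReal (1 / 2) := by
    have hconv := tendstoInMeasure_iff_norm.1 (tendstoInMeasure_add_sub hmeas hlim (b + 1))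
      (ε / 2) (half_pos hε)
    simp only [Pi.zero_apply, sub_zero, Measure.restrict_apply' measurableSet_Icc] at hconv
    exact hconv.eventually_lt_const (by simp)
  filter_upwards [eventually_forall_ge_atTop.2 hbad_small] with x hx c hc
  have hnot_covered : ¬ Icc b (b + 1) ⊆ bad x ∪ (fun w => w - c) ⁻¹' bad (x + c) := by
    intro hsub
    refine lt_irrefl (1 : ENNReal) ?_
    calc (1 : ENNReal) = volume (Icc b (b + 1)) := by simp
      _ ≤ volume (bad x) + volume ((fun w => w - c) ⁻¹' bad (x + c)) :=
        (measure_mono hsub).trans (measure_union_le _ _)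
      _ = volume (bad x) + volume (bad (x + c)) := by
        simp only [sub_eq_add_neg, measure_preimage_add_right]
      _ < ENNReal.ofReal (1 / 2) + ENNReal.ofReal (1 / 2) :=
        ENNReal.add_lt_add (hx x le_rfl) (hx (x + c) (le_add_of_nonneg_right hc.1))
      _ = 1 := by rw [← ENNReal.ofReal_add (by norm_num) (by norm_num)]; norm_num
  obtain ⟨w, hw, hw_good⟩ := not_subset.1 hnot_covered
  have hnear_x : ‖h (x + w) - h x‖ < ε / 2 := by
    by_contra! hge
    exact hw_good (Or.inl ⟨hge, by linarith [hc.1, hc.2, hw.1], hw.2⟩)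
  have hnear_xc : ‖h (x + w) - h (x + c)‖ < ε / 2 := by
    by_contra! hge
    refine hw_good (Or.inr ⟨?_, by linarith [hc.2, hw.1], by linarith [hc.1, hw.2]⟩)
    simpa only [mem_ofPred_eq, add_add_sub_cancel] using hge
  calc dist (0 : E) (h (x + c) - h x)
      = ‖(h (x + w) - h x) - (h (x + w) - h (x + c))‖ := by
        rw [dist_zero_left, sub_sub_sub_cancel_left]
    _ ≤ ‖h (x + w) - h x‖ + ‖h (x + w) - h (x + c)‖ := norm_sub_le _ _
    _ < ε := by linarith

lemma norm_add_sub_le_of_forall_mem_Icc {ε T : ℝ} (hε : 0 ≤ ε)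
    (hstep : ∀ x ≥ T, ∀ u ∈ Icc (0 : ℝ) 1, ‖h (x + u) - h x‖ ≤ ε) (n : ℕ) :
    ∀ x ≥ T, ∀ u ∈ Icc (0 : ℝ) n, ‖h (x + u) - h x‖ ≤ ε * (u + 1) := by
  induction n with
  | zero =>
    intro x hx u hu
    have hu1 : u ≤ 1 := hu.2.trans (by simp)
    exact (hstep x hx u ⟨hu.1, hu1⟩).trans (le_mul_of_one_le_right hε (by linarith [hu.1]))
  | succ n ih =>
    intro x hx u hu
    rcases le_total u 1 with hu1 | hu1
    · exact (hstep x hx u ⟨hu.1, hu1⟩).trans (le_mul_of_one_le_right hε (by linarith [hu.1]))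
    have htail := ih (x + 1) (by linarith) (u - 1)
      ⟨by linarith, by have := hu.2; push_cast at this; linarith⟩
    have hfirst := hstep x hx 1 ⟨zero_le_one, le_rfl⟩
    rw [add_add_sub_cancel] at htail
    calc ‖h (x + u) - h x‖ ≤ ‖h (x + u) - h (x + 1)‖ + ‖h (x + 1) - h x‖ :=
          norm_sub_le_norm_sub_add_norm_sub _ _ _
      _ ≤ ε * (u + 1) := by linarith

lemma eventually_norm_add_sub_le (hmeas : AEStronglyMeasurable h (volume.restrict (Ici X)))
    (hlim : ∀ u, Tendsto (fun x => h (x + u) - h x) atTop (𝓝 0)) {ε : ℝ} (hε : 0 < ε) :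
    ∀ᶠ x in atTop, ∀ u ≥ 0, ‖h (x + u) - h x‖ ≤ ε * (u + 1) := by
  have hunif := Metric.tendstoUniformlyOn_iff.1 (tendstoUniformlyOn_add_sub hmeas hlim 1) ε hε
  filter_upwards [eventually_forall_ge_atTop.2 hunif] with x hx u hu
  obtain ⟨n, hn⟩ := exists_nat_ge u
  refine norm_add_sub_le_of_forall_mem_Icc hε.le (fun y hy v hv => ?_) n x le_rfl u ⟨hu, hn⟩
  simpa only [Pi.zero_apply, dist_zero_left] using (hx y hy v hv).le

end UniformConvergence

lemma quasiMeasurePreserving_restrict_of_leftInvOn {E : Type*} [NormedAddCommGroup E]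
    [NormedSpace ℝ E] [FiniteDimensional ℝ E] [MeasurableSpace E] [BorelSpace E]
    (μ : Measure E) [μ.IsAddHaarMeasure] {φ ψ : E → E} {s u : Set E} (hφ : Measurable φ)
    (hmaps : MapsTo φ s u) (hψ : DifferentiableOn ℝ ψ u) (hinv : LeftInvOn ψ φ s) :
    Measure.QuasiMeasurePreserving φ (μ.restrict s) (μ.restrict u) := by
  refine ⟨hφ, Measure.AbsolutelyContinuous.mk fun N hN hNu => ?_⟩
  rw [Measure.restrict_apply hN] at hNu
  rw [Measure.map_apply hφ hN, Measure.restrict_apply (hφ hN)]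
  refine measure_mono_null (t := ψ '' (N ∩ u)) ?_ <|
    addHaar_image_eq_zero_of_differentiableOn_of_addHaar_eq_zero μ (hψ.mono inter_subset_right) hNu
  exact fun x hx => ⟨φ x, ⟨hx.1, hmaps hx.2⟩, hinv hx.2⟩

lemma aemeasurable_comp_exp {β : Type*} [MeasurableSpace β] {f : ℝ → β} {X : ℝ} (hX : 0 < X)
    (hf : AEMeasurable f (volume.restrict (Ici X))) :
    AEMeasurable (fun x => f (exp x)) (volume.restrict (Ici (log X))) := by
  refine hf.comp_quasiMeasurePreserving <| quasiMeasurePreserving_restrict_of_leftInvOn volume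
    measurable_exp (fun x hx => (log_le_iff_le_exp hX).1 hx) (ψ := log) ?_ fun x _ => log_exp x
  exact differentiableOn_log.mono fun x hx => (hX.trans_le hx).ne'

/-- Slow variation at infinity, in the sense of Karamata; it only concerns the germ of `ℓ` at
infinity, so positivity is only required there. Measurability is not part of the definition. -/
structure IsSlowlyVarying (ℓ : ℝ → ℝ) : Prop where
  eventually_pos : ∀ᶠ t in atTop, 0 < ℓ t
  tendsto_div : ∀ c, 0 < c → Tendsto (fun t => ℓ (c * t) / ℓ t) atTop (𝓝 1)

namespace IsSlowlyVarying

variable {ℓ : ℝ → ℝ}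

lemma tendsto_log_comp_exp (hℓ : IsSlowlyVarying ℓ) (u : ℝ) :
    Tendsto (fun x => log (ℓ (exp (x + u))) - log (ℓ (exp x))) atTop (𝓝 0) := by
  have hlog := ((hℓ.tendsto_div (exp u) (exp_pos u)).comp tendsto_exp_atTop).log one_ne_zero
  rw [log_one] at hlog
  refine hlog.congr' ?_
  filter_upwards [tendsto_exp_atTop.eventually hℓ.eventually_pos,
    (tendsto_exp_atTop.comp (tendsto_atTop_add_const_right _ u tendsto_id)).eventually
      hℓ.eventually_pos] with x hx hxu
  simp only [Function.comp_apply, id_eq] at hxu ⊢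
  rw [mul_comm, ← exp_add, log_div hxu.ne' hx.ne']

lemma eventually_le_mul_rpow (hℓ : IsSlowlyVarying ℓ) {X : ℝ}
    (hmeas : AEMeasurable ℓ (volume.restrict (Ici X))) {A δ : ℝ} (hA : 1 < A) (hδ : 0 < δ) :
    ∀ᶠ t in atTop, ∀ c ≥ 1, ℓ (c * t) ≤ A * c ^ δ * ℓ t := by
  have hmeas_log : AEMeasurable (fun x => log (ℓ (exp x)))
      (volume.restrict (Ici (log (max X 1)))) :=
    measurable_log.comp_aemeasurable <| aemeasurable_comp_exp (by positivity) <|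
      hmeas.mono_measure <| Measure.restrict_mono_set _ (Ici_subset_Ici.2 (le_max_left X 1))
  have hgrowth := eventually_norm_add_sub_le hmeas_log.aestronglyMeasurable
    hℓ.tendsto_log_comp_exp (lt_min (log_pos hA) hδ)
  filter_upwards [tendsto_log_atTop.eventually hgrowth, eventually_gt_atTop 0,
    eventually_forall_ge_atTop.2 hℓ.eventually_pos] with t ht ht0 hpos c hc
  have hc0 : 0 < c := one_pos.trans_le hc
  have hℓt := hpos t le_rfl
  have hℓct := hpos (c * t) (le_mul_of_one_le_left ht0.le hc)
  have hlogc := log_nonneg hc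
  have hdiff : log (ℓ (c * t)) - log (ℓ t) ≤ min (log A) δ * (log c + 1) := by
    have := ht (log c) hlogc
    rw [exp_add, exp_log ht0, exp_log hc0, mul_comm t] at this
    exact (le_norm_self _).trans this
  rw [← log_le_log_iff hℓct (by positivity), log_mul (by positivity) hℓt.ne',
    log_mul (by positivity) (by positivity), log_rpow hc0]
  calc log (ℓ (c * t)) ≤ min (log A) δ * log c + min (log A) δ + log (ℓ t) := by linarith
    _ ≤ δ * log c + log A + log (ℓ t) := by
      gcongr
      · exact min_le_right _ _
      · exact min_le_left _ _
    _ = log A + δ * log c + log (ℓ t) := by ring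

end IsSlowlyVarying

lemma integrableOn_Ioi_rpow_mul_exp_neg {p : ℝ} (hp : 0 < p) :
    IntegrableOn (fun y => y ^ (p - 1) * exp (-y)) (Ioi 0) := by
  simpa only [mul_comm] using GammaIntegral_convergent hp

lemma setIntegral_Ioc_rpow_mul_exp_neg_le {p r : ℝ} (hp : 0 < p) (hr : 1 ≤ r) (b : ℝ) :
    ∫ y in Ioc 0 b, y ^ (p - 1) * exp (-y) ≤ exp ((r - 1) * b) * ((1 / r) ^ p * Gamma p) := by
  have hr0 : 0 < r := one_pos.trans_le hr
  have htilted := integral_rpow_mul_exp_neg_mul_Ioi hp hr0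
  have htilted_int : IntegrableOn (fun y => y ^ (p - 1) * exp (-(r * y))) (Ioi 0) := by
    refine Integrable.of_integral_ne_zero ?_
    rw [htilted]
    exact (mul_pos (by positivity) (Gamma_pos_of_pos hp)).ne'
  have hpointwise : ∀ y ∈ Ioc 0 b, y ^ (p - 1) * exp (-y)
      ≤ exp ((r - 1) * b) * (y ^ (p - 1) * exp (-(r * y))) := by
    intro y hy
    have htilt : exp (-y) ≤ exp ((r - 1) * b) * exp (-(r * y)) := by
      rw [← exp_add, exp_le_exp]
      linarith [mul_le_mul_of_nonneg_left hy.2 (sub_nonneg.2 hr)]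
    rw [mul_left_comm]
    exact mul_le_mul_of_nonneg_left htilt (rpow_nonneg hy.1.le _)
  calc ∫ y in Ioc 0 b, y ^ (p - 1) * exp (-y)
      ≤ ∫ y in Ioc 0 b, exp ((r - 1) * b) * (y ^ (p - 1) * exp (-(r * y))) := by
        exact setIntegral_mono_on
          ((integrableOn_Ioi_rpow_mul_exp_neg hp).mono_set Ioc_subset_Ioi_self)
          ((htilted_int.mono_set Ioc_subset_Ioi_self).const_mul _) measurableSet_Ioc hpointwise
    _ = exp ((r - 1) * b) * ∫ y in Ioc 0 b, y ^ (p - 1) * exp (-(r * y)) :=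
        integral_const_mul _ _
    _ ≤ exp ((r - 1) * b) * ∫ y in Ioi 0, y ^ (p - 1) * exp (-(r * y)) := by
        refine mul_le_mul_of_nonneg_left ?_ (exp_pos _).le
        refine setIntegral_mono_set htilted_int ?_ (ae_of_all _ Ioc_subset_Ioi_self)
        filter_upwards [ae_restrict_mem measurableSet_Ioi] with y hy
        exact mul_nonneg (rpow_nonneg hy.le _) (exp_pos _).le
    _ = exp ((r - 1) * b) * ((1 / r) ^ p * Gamma p) := by rw [htilted]

lemma mul_setIntegral_Ioc_rpow_mul_exp_neg_le {a Q : ℝ} (ha : 0 < a) (ha1 : a ≤ 1) (hQ : 2 ≤ Q) :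
    Q * ∫ y in Ioc 0 (a * Q), y ^ (Q - 1 - 1) * exp (-y)
      ≤ 2 / a * (a * exp (1 - a)) ^ Q * Gamma Q := by
  have hQ1 : 0 < Q - 1 := by linarith
  have hGamma : Gamma Q = (Q - 1) * Gamma (Q - 1) := by
    simpa only [sub_add_cancel] using Gamma_add_one hQ1.ne'
  have := Gamma_pos_of_pos hQ1
  have hpow : (a * exp (1 - a)) ^ Q = a * (exp ((1 - a) * Q) * a ^ (Q - 1)) := by
    rw [mul_rpow ha.le (exp_pos _).le, ← exp_mul, rpow_sub_one ha.ne']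
    field_simp
  calc Q * ∫ y in Ioc 0 (a * Q), y ^ (Q - 1 - 1) * exp (-y)
      ≤ Q * (exp ((1 / a - 1) * (a * Q)) * ((1 / (1 / a)) ^ (Q - 1) * Gamma (Q - 1))) := by
        gcongr
        exact setIntegral_Ioc_rpow_mul_exp_neg_le hQ1 ((one_le_div ha).2 ha1) _
    _ = Q * (exp ((1 - a) * Q) * (a ^ (Q - 1) * Gamma (Q - 1))) := by
        rw [one_div_one_div, ← mul_assoc (1 / a - 1), sub_mul, one_div_mul_cancel ha.ne', one_mul]
    _ ≤ 2 * (Q - 1) * (exp ((1 - a) * Q) * (a ^ (Q - 1) * Gamma (Q - 1))) := by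
        gcongr
        linarith
    _ = 2 / a * (a * exp (1 - a)) ^ Q * Gamma Q := by
        rw [hpow, hGamma]
        field_simp

lemma setIntegral_Ioc_rpow_mul_exp_neg_mul_le {a Q C : ℝ} {w : ℝ → ℝ} (ha : 0 < a) (ha1 : a ≤ 1)
    (hQ : 2 ≤ Q) (hC : 0 ≤ C) (hw0 : ∀ y ∈ Ioc 0 (a * Q), 0 ≤ w y)
    (hw : ∀ y ∈ Ioc 0 (a * Q), w y ≤ C * (Q / y)) :
    ∫ y in Ioc 0 (a * Q), y ^ (Q - 1) * exp (-y) * w y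
      ≤ C * (2 / a * (a * exp (1 - a)) ^ Q * Gamma Q) := by
  have hpointwise : ∀ y ∈ Ioc 0 (a * Q), y ^ (Q - 1) * exp (-y) * w y
      ≤ C * Q * (y ^ (Q - 1 - 1) * exp (-y)) := by
    intro y hy
    have hy0 := hy.1
    calc y ^ (Q - 1) * exp (-y) * w y ≤ y ^ (Q - 1) * exp (-y) * (C * (Q / y)) := by
          gcongr
          exact hw y hy
      _ = C * Q * (y ^ (Q - 1 - 1) * exp (-y)) := by
          rw [rpow_sub_one hy0.ne' (Q - 1)]
          ring
  have hint : IntegrableOn (fun y => y ^ (Q - 1 - 1) * exp (-y)) (Ioc 0 (a * Q)) :=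
    (integrableOn_Ioi_rpow_mul_exp_neg (by linarith)).mono_set Ioc_subset_Ioi_self
  calc ∫ y in Ioc 0 (a * Q), y ^ (Q - 1) * exp (-y) * w y
      ≤ ∫ y in Ioc 0 (a * Q), C * Q * (y ^ (Q - 1 - 1) * exp (-y)) := by
        refine integral_mono_of_nonneg ?_ (hint.const_mul _) ?_
        · filter_upwards [ae_restrict_mem measurableSet_Ioc] with y hy
          exact mul_nonneg (mul_nonneg (rpow_nonneg hy.1.le _) (exp_pos _).le) (hw0 y hy)
        · filter_upwards [ae_restrict_mem measurableSet_Ioc] with y hy using hpointwise y hy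
    _ = C * (Q * ∫ y in Ioc 0 (a * Q), y ^ (Q - 1 - 1) * exp (-y)) := by
        rw [integral_const_mul, mul_assoc]
    _ ≤ C * (2 / a * (a * exp (1 - a)) ^ Q * Gamma Q) := by
        exact mul_le_mul_of_nonneg_left (mul_setIntegral_Ioc_rpow_mul_exp_neg_le ha ha1 hQ) hC

lemma aemeasurable_of_integrableOn_rpow_mul_exp_neg_mul {ℓ : ℝ → ℝ} {t b p : ℝ} (ht : 0 < t)
    (hb : 0 < b) (hint : IntegrableOn (fun y => y ^ p * exp (-y) * ℓ (t / y)) (Ioc 0 b)) :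
    AEMeasurable ℓ (volume.restrict (Ici (t / b))) := by
  have hreflect : Measure.QuasiMeasurePreserving (fun x => t / x)
      (volume.restrict (Ici (t / b))) (volume.restrict (Ioc 0 b)) := by
    refine quasiMeasurePreserving_restrict_of_leftInvOn volume (by fun_prop) (fun x hx => ?_)
      (ψ := fun y => t / y) (fun y hy => ?_) fun x _ => div_div_cancel₀ ht.ne'
    · have hx0 : 0 < x := (div_pos ht hb).trans_le hx
      exact ⟨div_pos ht hx0, (div_le_comm₀ hb hx0).1 hx⟩
    · exact ((differentiableAt_const t).div differentiableAt_id hy.1.ne').differentiableWithinAt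
  have hcomp : AEMeasurable (fun y => ℓ (t / y)) (volume.restrict (Ioc 0 b)) := by
    have hweight : Measurable fun y : ℝ => y ^ p * exp (-y) := by fun_prop
    refine (hint.aestronglyMeasurable.aemeasurable.div hweight.aemeasurable).congr ?_
    filter_upwards [ae_restrict_mem measurableSet_Ioc] with y hy
    exact mul_div_cancel_left₀ _ (mul_pos (rpow_pos_of_pos hy.1 p) (exp_pos _)).ne'
  refine (hcomp.comp_quasiMeasurePreserving hreflect).congr (ae_of_all _ fun x => ?_)
  simp only [Function.comp_apply, div_div_cancel₀ ht.ne']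

lemma mul_exp_one_sub_lt_one {a : ℝ} (ha : a ≠ 1) : a * exp (1 - a) < 1 := by
  have hlt : a < exp (a - 1) := by
    simpa only [sub_add_cancel] using add_one_lt_exp (sub_ne_zero.2 ha)
  calc a * exp (1 - a) < exp (a - 1) * exp (1 - a) := by gcongr
    _ = 1 := by rw [← exp_add, sub_add_sub_cancel, sub_self, exp_zero]

lemma IsSlowlyVarying.eventually_setIntegral_mem_Icc {ℓ : ℝ → ℝ} (hℓ : IsSlowlyVarying ℓ) {a : ℝ}
    (ha : 0 < a) (ha1 : a ≤ 1) :
    ∀ᶠ s in atTop, ∀ Q ≥ 2, ∫ y in Ioc 0 (a * Q), y ^ (Q - 1) * exp (-y) * ℓ (s * Q / y)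
      ∈ Icc 0 (4 / a * (a * exp (1 - a)) ^ Q * (Gamma Q * ℓ s)) := by
  by_cases hmeas : ∃ X, AEMeasurable ℓ (volume.restrict (Ici X))
  · obtain ⟨X, hX⟩ := hmeas
    filter_upwards [hℓ.eventually_le_mul_rpow hX one_lt_two one_pos, eventually_gt_atTop 0,
      eventually_forall_ge_atTop.2 hℓ.eventually_pos] with s hpotter hs hpos Q hQ
    have hratio : ∀ y ∈ Ioc 0 (a * Q), 1 ≤ Q / y := fun y hy =>
      (one_le_div hy.1).2 (hy.2.trans (mul_le_of_le_one_left (by linarith) ha1))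
    have hℓ_nonneg : ∀ y ∈ Ioc 0 (a * Q), 0 ≤ ℓ (s * Q / y) := fun y hy => by
      rw [mul_div_assoc]
      exact (hpos _ (le_mul_of_one_le_right hs.le (hratio y hy))).le
    have hℓ_le : ∀ y ∈ Ioc 0 (a * Q), ℓ (s * Q / y) ≤ 2 * ℓ s * (Q / y) := fun y hy => by
      have := hpotter (Q / y) (hratio y hy)
      rwa [rpow_one, mul_right_comm, div_mul_eq_mul_div, mul_comm Q] at this
    refine ⟨setIntegral_nonneg measurableSet_Ioc fun y hy => ?_, ?_⟩
    · exact mul_nonneg (mul_nonneg (rpow_nonneg hy.1.le _) (exp_pos _).le) (hℓ_nonneg y hy)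
    · refine (setIntegral_Ioc_rpow_mul_exp_neg_mul_le ha ha1 hQ
        (mul_nonneg zero_le_two (hpos s le_rfl).le) hℓ_nonneg hℓ_le).trans_eq ?_
      ring
  · filter_upwards [eventually_gt_atTop 0, hℓ.eventually_pos] with s hs hℓs Q hQ
    have hQ0 : 0 < Q := two_pos.trans_le hQ
    have := Gamma_pos_of_pos hQ0
    rw [integral_undef fun hint => hmeas
      ⟨_, aemeasurable_of_integrableOn_rpow_mul_exp_neg_mul (mul_pos hs hQ0) (mul_pos ha hQ0) hint⟩]
    exact ⟨le_rfl, by positivity⟩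

theorem stmt_7_general {ℓ q : ℝ → ℝ} (hℓ : IsSlowlyVarying ℓ) (hqtop : Tendsto q atTop atTop)
    (hqsmall : Tendsto (fun t => q t / t) atTop (𝓝 0)) {a : ℝ} (ha : 0 < a) (ha1 : a < 1) :
    Tendsto (fun t =>
      (∫ y in Ioc 0 (a * q t), y ^ (q t - 1) * exp (-y) * ℓ (t / y)) /
        (Gamma (q t) * ℓ (t / q t))) atTop (𝓝 0) := by
  have hscale : Tendsto (fun t => t / q t) atTop atTop := by
    have hpos : ∀ᶠ t in atTop, q t / t ∈ Ioi 0 := by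
      filter_upwards [hqtop.eventually_gt_atTop 0, eventually_gt_atTop 0] with t hq ht
      exact div_pos hq ht
    exact (tendsto_nhdsWithin_iff.2 ⟨hqsmall, hpos⟩).inv_tendsto_nhdsGT_zero.congr
      fun t => inv_div (q t) t
  have hgeom : Tendsto (fun t => 4 / a * (a * exp (1 - a)) ^ q t) atTop (𝓝 0) := by
    have hbase : -1 < a * exp (1 - a) := by linarith [mul_pos ha (exp_pos (1 - a))]
    simpa only [mul_zero, Function.comp_apply] using ((tendsto_rpow_atTop_of_base_lt_one _ hbase
      (mul_exp_one_sub_lt_one ha1.ne)).comp hqtop).const_mul (4 / a)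
  have hbound : ∀ᶠ t in atTop, (∫ y in Ioc 0 (a * q t), y ^ (q t - 1) * exp (-y) * ℓ (t / y)) /
      (Gamma (q t) * ℓ (t / q t)) ∈ Icc 0 (4 / a * (a * exp (1 - a)) ^ q t) := by
    filter_upwards [hscale.eventually (hℓ.eventually_setIntegral_mem_Icc ha ha1.le),
      hscale.eventually hℓ.eventually_pos, hqtop.eventually_ge_atTop 2] with t hint hℓt hq
    have hq0 : 0 < q t := two_pos.trans_le hq
    have hden : 0 < Gamma (q t) * ℓ (t / q t) := mul_pos (Gamma_pos_of_pos hq0) hℓt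
    specialize hint (q t) hq
    rw [div_mul_cancel₀ t hq0.ne'] at hint
    exact ⟨div_nonneg hint.1 hden.le, (div_le_iff₀ hden).2 hint.2⟩
  exact squeeze_zero' (hbound.mono fun _ h => h.1) (hbound.mono fun _ h => h.2) hgeom

/-- Equation (3.2): for `ℓ` positive, locally bounded and slowly varying, `q` of class `𝒬`
and `0 < a < 1`, the lower part of the integral is negligible:
`∫₀^{a q(t)} y^(q(t)-1) e^(-y) ℓ(t/y) dy / (Γ(q(t)) ℓ(t/q(t))) → 0` as `t → ∞`. -/
theorem stmt_7
    (ℓ : ℝ → ℝ)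
    (hℓpos : ∀ x : ℝ, 0 < x → 0 < ℓ x)
    (hℓloc : ∀ a b : ℝ, 0 < a → BddAbove (ℓ '' Set.Icc a b))
    (hℓsv : ∀ c : ℝ, 0 < c → Tendsto (fun t => ℓ (c * t) / ℓ t) atTop (nhds 1))
    (q : ℝ → ℝ)
    (hqpos : ∀ t : ℝ, 0 < t → 0 < q t)
    (hqtop : Tendsto q atTop atTop)
    (hqsmall : Tendsto (fun t => q t / t) atTop (nhds 0))
    (a : ℝ) (ha : 0 < a) (ha1 : a < 1) :
    Tendsto (fun t =>
      (∫ y in Set.Ioc (0:ℝ) (a * q t), y ^ (q t - 1) * Real.exp (-y) * ℓ (t / y)) /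
        (Real.Gamma (q t) * ℓ (t / q t))) atTop (nhds 0) :=
  stmt_7_general ⟨(eventually_gt_atTop 0).mono hℓpos, hℓsv⟩ hqtop hqsmall ha ha1
end

section
/- Let ℓ : (0,∞) → (0,∞) be a locally bounded function that is slowly varying at infinity, let q be a function of class 𝒬, and fix a constant A with A > 1. Then lim_{t→∞} [∫_{A q(t)}^{∞} y^{q(t)−1} e^{−y} ℓ(t/y) dy] / [Γ(q(t)) ℓ(t/q(t))] = 0. -/
open MeasureTheory Set Filter Real

/-!
Unless the integrals exist for arbitrarily large `t`, they vanish eventually by convention. If they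
do exist, `ℓ` is almost everywhere measurable, which is what the uniform convergence theorem for
slowly varying functions needs: with `h = log ∘ ℓ ∘ exp`, an increment `h (u + v) - h u` is at most
an increment from `u` plus one from `u + v`, and averaging over the common endpoint lets dominated
convergence act on both. Chaining increments of length at most one gives Potter's bound
`ℓ x ≤ 2 (z / x) ℓ z` for `X ≤ x ≤ z`.

The integral is now split at `y = t / X`. Below this point Potter's bound compares `ℓ (t / y)` with
`ℓ (t / q)` at the cost of a factor `y / q`, and the Gamma tail beyond `A q` is exponentially small
by Chernoff's bound, with rate `(A e ^ (1 - A)) ^ q`. Above it, `ℓ` is evaluated on `(0, X)`, where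
it may be unbounded; substituting `y = t z` and comparing with a single finite integral, at some
`t₀`, bounds the contribution by a multiple of `w ^ q e ^ (-w)` with `w = t / X`. As `q = o(w)`,
this is negligible even against `Γ(q) ℓ (t / q)`.
-/

open scoped Topology

section UniformConvergence

variable {E : Type*} [SeminormedAddCommGroup E] {h : ℝ → E}

/-- The size of the increment `h (u + s) - h u`, truncated at `1` so that dominated convergence
applies whether or not `h` is locally integrable. -/
noncomputable def truncIncrement (h : ℝ → E) (u s : ℝ) : ℝ :=
  min ‖h (u + s) - h u‖ 1

lemma truncIncrement_nonneg (h : ℝ → E) (u s : ℝ) : 0 ≤ truncIncrement h u s :=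
  le_min (norm_nonneg _) zero_le_one

lemma norm_truncIncrement_le_one (h : ℝ → E) (u s : ℝ) : ‖truncIncrement h u s‖ ≤ 1 := by
  rw [norm_of_nonneg (truncIncrement_nonneg h u s)]
  exact min_le_right _ _

lemma truncIncrement_le_add (h : ℝ → E) (u s v : ℝ) :
    truncIncrement h u v ≤ truncIncrement h u s + truncIncrement h (u + v) (s - v) := by
  have triangle : ‖h (u + v) - h u‖ ≤ ‖h (u + s) - h u‖ + ‖h (u + s) - h (u + v)‖ := by
    rw [norm_sub_rev (h (u + s)) (h (u + v)), add_comm ‖h (u + s) - h u‖]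
    exact norm_sub_le_norm_sub_add_norm_sub (h (u + v)) (h (u + s)) (h u)
  have hs : u + v + (s - v) = u + s := by ring
  simp only [truncIncrement, hs]
  grind [norm_nonneg (h (u + s) - h u), norm_nonneg (h (u + s) - h (u + v))]

lemma aestronglyMeasurable_truncIncrement (hm : AEStronglyMeasurable h) (u : ℝ) :
    AEStronglyMeasurable (truncIncrement h u) := by
  have hshift : AEStronglyMeasurable fun s ↦ h (u + s) :=
    hm.comp_quasiMeasurePreserving (measurePreserving_add_left volume u).quasiMeasurePreserving
  exact (hshift.sub aestronglyMeasurable_const).norm.inf aestronglyMeasurable_const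

lemma intervalIntegrable_truncIncrement (hm : AEStronglyMeasurable h) (u a b : ℝ) :
    IntervalIntegrable (truncIncrement h u) volume a b :=
  (intervalIntegrable_const (c := (1 : ℝ))).mono_fun
    (aestronglyMeasurable_truncIncrement hm u).restrict
    (.of_forall fun s ↦ by simpa using norm_truncIncrement_le_one h u s)

lemma tendsto_integral_truncIncrement (hm : AEStronglyMeasurable h)
    (hlim : ∀ v, Tendsto (fun u ↦ h (u + v) - h u) atTop (𝓝 0)) (a b : ℝ) :
    Tendsto (fun u ↦ ∫ s in a..b, truncIncrement h u s) atTop (𝓝 0) := by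
  rw [← intervalIntegral.integral_zero (μ := volume) (a := a) (b := b)]
  refine intervalIntegral.tendsto_integral_filter_of_dominated_convergence (fun _ ↦ 1)
    (.of_forall fun u ↦ (aestronglyMeasurable_truncIncrement hm u).restrict)
    (.of_forall fun u ↦ .of_forall fun s _ ↦ norm_truncIncrement_le_one h u s)
    intervalIntegrable_const (.of_forall fun s _ ↦ ?_)
  simpa [truncIncrement] using (hlim s).norm.min (tendsto_const_nhds (x := (1 : ℝ)))

lemma truncIncrement_le_integral_add_integral (hm : AEStronglyMeasurable h) {M v : ℝ}
    (hv : v ∈ Icc (-M) M) (u : ℝ) :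
    truncIncrement h u v ≤ (∫ s in -M..M + 1, truncIncrement h u s) +
      ∫ s in -M..M + 1, truncIncrement h (u + v) s := by
  obtain ⟨hvl, hvr⟩ := hv
  have subinterval (w a b : ℝ) (ha : -M ≤ a) (hab : a ≤ b) (hb : b ≤ M + 1) :
      ∫ s in a..b, truncIncrement h w s ≤ ∫ s in -M..M + 1, truncIncrement h w s :=
    intervalIntegral.integral_mono_interval ha hab hb
      (.of_forall (truncIncrement_nonneg h w)) (intervalIntegrable_truncIncrement hm _ _ _)
  have hshift : IntervalIntegrable (fun s ↦ truncIncrement h (u + v) (s - v)) volume 0 1 := by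
    simpa using (intervalIntegrable_truncIncrement hm (u + v) (0 - v) (1 - v)).comp_sub_right v
  have hu := intervalIntegrable_truncIncrement hm u 0 1
  calc truncIncrement h u v = ∫ _ in (0 : ℝ)..1, truncIncrement h u v := by simp
    _ ≤ ∫ s in (0 : ℝ)..1, (truncIncrement h u s + truncIncrement h (u + v) (s - v)) :=
        intervalIntegral.integral_mono_on zero_le_one intervalIntegrable_const (hu.add hshift)
          fun s _ ↦ truncIncrement_le_add h u s v
    _ = (∫ s in (0 : ℝ)..1, truncIncrement h u s) +
          ∫ s in 0 - v..1 - v, truncIncrement h (u + v) s := by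
        rw [intervalIntegral.integral_add hu hshift,
          intervalIntegral.integral_comp_sub_right (truncIncrement h (u + v))]
    _ ≤ _ := by
        gcongr <;> exact subinterval _ _ _ (by linarith) (by linarith) (by linarith)

theorem tendstoUniformlyOn_sub_of_tendsto_sub (hm : AEStronglyMeasurable h)
    (hlim : ∀ v, Tendsto (fun u ↦ h (u + v) - h u) atTop (𝓝 0)) {K : Set ℝ}
    (hK : Bornology.IsBounded K) :
    TendstoUniformlyOn (fun u v ↦ h (u + v) - h u) 0 atTop K := by
  obtain ⟨M, hKM⟩ := hK.subset_closedBall 0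
  rw [closedBall_eq_Icc, zero_sub, zero_add] at hKM
  rw [Metric.tendstoUniformlyOn_iff]
  intro ε hε
  have hη : 0 < min ε 1 / 2 := by positivity
  obtain ⟨U, hU⟩ := eventually_atTop.1 <|
    (tendsto_integral_truncIncrement hm hlim (-M) (M + 1)).eventually_lt_const hη
  filter_upwards [eventually_ge_atTop U, eventually_ge_atTop (U + M)] with u hu huM v hv
  have hsmall : truncIncrement h u v < min ε 1 := by
    linarith [truncIncrement_le_integral_add_integral hm (hKM hv) u, hU u hu,
      hU (u + v) (by linarith [(hKM hv).1])]
  rw [Pi.zero_apply, dist_zero_left]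
  exact (lt_min_iff.1 ((min_lt_iff.1 hsmall).resolve_right (not_lt.2 (min_le_right _ _)))).1

theorem eventually_forall_norm_sub_le_of_tendsto_sub (hm : AEStronglyMeasurable h)
    (hlim : ∀ v, Tendsto (fun u ↦ h (u + v) - h u) atTop (𝓝 0)) {ε : ℝ} (hε : 0 < ε) :
    ∀ᶠ u in atTop, ∀ v, 0 ≤ v → ‖h (u + v) - h u‖ ≤ ε * (v + 1) := by
  obtain ⟨U, hU⟩ := eventually_atTop.1 <| Metric.tendstoUniformlyOn_iff.1
    (tendstoUniformlyOn_sub_of_tendsto_sub hm hlim (Metric.isBounded_Icc 0 1)) ε hε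
  have unit_step (u v : ℝ) (hu : U ≤ u) (hv : v ∈ Icc 0 1) : ‖h (u + v) - h u‖ ≤ ε := by
    simpa only [Pi.zero_apply, dist_zero_left] using (hU u hu v hv).le
  filter_upwards [eventually_ge_atTop U] with u hu
  have nat_steps (n : ℕ) : ‖h (u + n) - h u‖ ≤ ε * n := by
    induction n with
    | zero => simp
    | succ n ih =>
      calc ‖h (u + (n + 1 : ℕ)) - h u‖ ≤ ‖h (u + n + 1) - h (u + n)‖ + ‖h (u + n) - h u‖ := by
            rw [Nat.cast_succ, ← add_assoc]
            exact norm_sub_le_norm_sub_add_norm_sub _ _ _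
        _ ≤ ε + ε * n :=
            add_le_add (unit_step _ 1 (le_add_of_le_of_nonneg hu n.cast_nonneg) (by simp)) ih
        _ = ε * (n + 1 : ℕ) := by push_cast; ring
  intro v hv
  have hfloor : ‖h (u + v) - h (u + ⌊v⌋₊)‖ ≤ ε := by
    have := unit_step (u + ⌊v⌋₊) (v - ⌊v⌋₊) (le_add_of_le_of_nonneg hu (Nat.cast_nonneg _))
      ⟨sub_nonneg.2 (Nat.floor_le hv), by linarith [Nat.lt_floor_add_one v]⟩
    rwa [show u + ⌊v⌋₊ + (v - ⌊v⌋₊) = u + v by ring] at this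
  calc ‖h (u + v) - h u‖ ≤ ‖h (u + v) - h (u + ⌊v⌋₊)‖ + ‖h (u + ⌊v⌋₊) - h u‖ :=
        norm_sub_le_norm_sub_add_norm_sub _ _ _
    _ ≤ ε + ε * ⌊v⌋₊ := add_le_add hfloor (nat_steps _)
    _ ≤ ε + ε * v := by gcongr; exact Nat.floor_le hv
    _ = ε * (v + 1) := by ring

end UniformConvergence

section ChangeOfVariables

lemma quasiMeasurePreserving_restrict_of_leftInvOn_s8 {f g : ℝ → ℝ} {s t : Set ℝ}
    (hf : Measurable f) (hst : MapsTo f s t)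
    (hg : DifferentiableOn ℝ g t) (hgf : LeftInvOn g f s) :
    Measure.QuasiMeasurePreserving f (volume.restrict s) (volume.restrict t) := by
  refine ⟨hf, Measure.AbsolutelyContinuous.mk fun N hN hNt ↦ ?_⟩
  rw [Measure.restrict_apply hN] at hNt
  rw [Measure.map_apply hf hN, Measure.restrict_apply (hf hN)]
  refine measure_mono_null ?_ (addHaar_image_eq_zero_of_differentiableOn_of_addHaar_eq_zero
    volume (hg.mono inter_subset_right) hNt)
  rintro x ⟨hxN, hxs⟩
  exact ⟨f x, ⟨hxN, hst hxs⟩, hgf hxs⟩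

lemma quasiMeasurePreserving_exp :
    Measure.QuasiMeasurePreserving exp volume (volume.restrict (Ioi 0)) := by
  nth_rw 1 [← Measure.restrict_univ (μ := volume)]
  exact quasiMeasurePreserving_restrict_of_leftInvOn_s8 measurable_exp
    (fun u _ ↦ exp_pos u)
    (differentiableOn_log.mono fun x (hx : 0 < x) ↦ hx.ne') (fun u _ ↦ log_exp u)

lemma quasiMeasurePreserving_const_div {t b : ℝ} (ht : 0 < t) (hb : 0 < b) :
    Measure.QuasiMeasurePreserving (t / ·) (volume.restrict (Ioo 0 (t / b)))
      (volume.restrict (Ioi b)) := by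
  refine quasiMeasurePreserving_restrict_of_leftInvOn_s8 (g := (t / ·)) (by fun_prop) ?_ ?_ ?_
  · rintro x ⟨hx, hxb⟩
    exact (lt_div_comm₀ hx hb).1 hxb
  · exact (differentiableOn_const t).div differentiableOn_id fun y hy ↦ (hb.trans hy).ne'
  · exact fun x _ ↦ div_div_cancel₀ ht.ne'

end ChangeOfVariables

/-- Slow variation at infinity: rescaling the argument by a fixed factor does not change `ℓ`
asymptotically. Positivity and measurability are not part of the notion here. -/
def IsSlowlyVarying_s8 (ℓ : ℝ → ℝ) : Prop :=
  ∀ c : ℝ, 0 < c → Tendsto (fun t ↦ ℓ (c * t) / ℓ t) atTop (𝓝 1)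

namespace IsSlowlyVarying_s8

variable {ℓ : ℝ → ℝ}

lemma tendsto_log_comp_exp_sub (h : IsSlowlyVarying_s8 ℓ) (hpos : ∀ x, 0 < x → 0 < ℓ x) (v : ℝ) :
    Tendsto (fun u ↦ log (ℓ (exp (u + v))) - log (ℓ (exp u))) atTop (𝓝 0) := by
  have hlog := ((h (exp v) (exp_pos v)).comp tendsto_exp_atTop).log one_ne_zero
  rw [log_one] at hlog
  refine hlog.congr fun u ↦ ?_
  rw [Function.comp_apply, ← exp_add, add_comm v u,
    log_div (hpos _ (exp_pos _)).ne' (hpos _ (exp_pos _)).ne']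

/-- One half of Potter's bounds. -/
theorem eventually_forall_le_mul_rpow (h : IsSlowlyVarying_s8 ℓ) (hpos : ∀ x, 0 < x → 0 < ℓ x)
    (hm : AEMeasurable ℓ (volume.restrict (Ioi 0))) {C δ : ℝ} (hC : 1 < C) (hδ : 0 < δ) :
    ∀ᶠ x in atTop, ∀ z, x ≤ z → ℓ x ≤ C * (z / x) ^ δ * ℓ z := by
  have hmlog : AEStronglyMeasurable fun u ↦ log (ℓ (exp u)) :=
    (measurable_log.comp_aemeasurable
      (hm.comp_quasiMeasurePreserving quasiMeasurePreserving_exp)).aestronglyMeasurable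
  have hlog := eventually_forall_norm_sub_le_of_tendsto_sub hmlog (h.tendsto_log_comp_exp_sub hpos)
    (lt_min hδ (log_pos hC))
  filter_upwards [tendsto_log_atTop.eventually hlog, eventually_gt_atTop 0] with x hx hx0 z hxz
  have hz0 : 0 < z := hx0.trans_le hxz
  have hv : 0 ≤ log (z / x) := log_nonneg ((one_le_div hx0).2 hxz)
  have hincr := neg_le_of_abs_le (hx _ hv)
  rw [← log_mul hx0.ne' (by positivity), mul_div_cancel₀ _ hx0.ne', exp_log hz0,
    exp_log hx0] at hincr
  have hℓz := hpos z hz0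
  have hstep : min δ (log C) * (log (z / x) + 1) ≤ δ * log (z / x) + log C := by
    rw [mul_add, mul_one]
    gcongr
    exacts [min_le_left _ _, min_le_right _ _]
  rw [← log_le_log_iff (hpos x hx0) (by positivity), log_mul (by positivity) hℓz.ne',
    log_mul (by positivity) (by positivity), log_rpow (by positivity)]
  linarith

end IsSlowlyVarying_s8

section GammaEstimates

lemma setIntegral_Ioi_rpow_mul_exp_neg_le {s b r : ℝ} (hs : 0 < s) (hb : 0 ≤ b) (hr : 0 < r)
    (hr1 : r ≤ 1) :
    ∫ y in Ioi b, y ^ (s - 1) * exp (-y) ≤ exp (-((1 - r) * b)) * ((1 / r) ^ s * Gamma s) := by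
  have hi : IntegrableOn (fun y ↦ y ^ (s - 1) * exp (-(r * y))) (Ioi 0) := by
    simpa using integrableOn_rpow_mul_exp_neg_mul_rpow (by linarith : -1 < s - 1) one_pos hr
  have hnonneg (y : ℝ) (hy : 0 < y) : 0 ≤ y ^ (s - 1) * exp (-(r * y)) := by positivity
  calc ∫ y in Ioi b, y ^ (s - 1) * exp (-y)
      ≤ ∫ y in Ioi b, exp (-((1 - r) * b)) * (y ^ (s - 1) * exp (-(r * y))) := by
        refine integral_mono_of_nonneg ?_ ((hi.mono_set (Ioi_subset_Ioi hb)).const_mul _) ?_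
        all_goals filter_upwards [ae_restrict_mem measurableSet_Ioi] with y hy
        all_goals have hy0 : 0 < y := hb.trans_lt hy
        · positivity
        · rw [mul_left_comm, ← exp_add]
          gcongr
          nlinarith [mem_Ioi.1 hy]
    _ = exp (-((1 - r) * b)) * ∫ y in Ioi b, y ^ (s - 1) * exp (-(r * y)) :=
        integral_const_mul _ _
    _ ≤ exp (-((1 - r) * b)) * ∫ y in Ioi 0, y ^ (s - 1) * exp (-(r * y)) := by
        gcongr ?_ * ?_
        exact setIntegral_mono_set hi
          ((ae_restrict_mem measurableSet_Ioi).mono fun y hy ↦ hnonneg y hy)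
          (Ioi_subset_Ioi hb).eventuallyLE
    _ = _ := by rw [integral_rpow_mul_exp_neg_mul_Ioi hs hr]

lemma rpow_mul_exp_neg_le_Gamma_add_one {s w : ℝ} (hs : 0 ≤ s) (hw : 0 ≤ w) :
    w ^ s * exp (-w) ≤ Gamma (s + 1) := by
  rw [Gamma_eq_integral (by positivity), add_sub_cancel_right]
  have hi : IntegrableOn (fun y ↦ exp (-y) * y ^ s) (Ioi 0) := by
    simpa using GammaIntegral_convergent (s := s + 1) (by positivity)
  calc w ^ s * exp (-w) = ∫ y in Ioi w, exp (-y) * w ^ s := by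
        rw [integral_mul_const, integral_exp_neg_Ioi, mul_comm]
    _ ≤ ∫ y in Ioi w, exp (-y) * y ^ s := by
        refine setIntegral_mono_on ((integrableOn_exp_neg_Ioi w).mul_const _)
          (hi.mono_set (Ioi_subset_Ioi hw)) measurableSet_Ioi fun y hy ↦ ?_
        gcongr
        exact (mem_Ioi.1 hy).le
    _ ≤ ∫ y in Ioi 0, exp (-y) * y ^ s :=
        setIntegral_mono_set hi ((ae_restrict_mem measurableSet_Ioi).mono
          fun y (hy : 0 < y) ↦ by dsimp; positivity) (Ioi_subset_Ioi hw).eventuallyLE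

lemma rpow_mul_exp_neg_le_mul_Gamma {s w : ℝ} (hs : 0 < s) (hsw : s ≤ w / 4) :
    w ^ s * exp (-w) ≤ w / 4 * exp (-(w / 4)) * Gamma s := by
  have hw : 0 < w := by linarith
  have := Gamma_pos_of_pos hs
  have two_rpow : (2 : ℝ) ^ s ≤ exp (w / 4) := by
    calc (2 : ℝ) ^ s ≤ exp 1 ^ s := by gcongr; linarith [add_one_le_exp (1 : ℝ)]
      _ = exp s := exp_one_rpow s
      _ ≤ exp (w / 4) := by gcongr
  calc w ^ s * exp (-w) = 2 ^ s * exp (-(w / 2)) * ((w / 2) ^ s * exp (-(w / 2))) := by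
        rw [div_rpow hw.le zero_le_two, show -w = -(w / 2) + -(w / 2) by ring, exp_add]
        field_simp
    _ ≤ exp (w / 4) * exp (-(w / 2)) * (s * Gamma s) := by
        rw [← Gamma_add_one hs.ne']
        gcongr
        exact rpow_mul_exp_neg_le_Gamma_add_one hs.le (by positivity)
    _ = s * exp (-(w / 4)) * Gamma s := by
        rw [← exp_add, show w / 4 + -(w / 2) = -(w / 4) by ring]
        ring
    _ ≤ w / 4 * exp (-(w / 4)) * Gamma s := by gcongr

lemma tendsto_rpow_mul_exp_neg_div_Gamma {α : Type*} {l : Filter α} {s w : α → ℝ}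
    (hs : ∀ᶠ t in l, 0 < s t) (hw : Tendsto w l atTop)
    (hsw : Tendsto (fun t ↦ s t / w t) l (𝓝 0)) :
    Tendsto (fun t ↦ w t ^ s t * exp (-w t) / Gamma (s t)) l (𝓝 0) := by
  have hdom : Tendsto (fun t ↦ w t / 4 * exp (-(w t / 4))) l (𝓝 0) := by
    simpa [Function.comp_def] using (tendsto_pow_mul_exp_neg_atTop_nhds_zero 1).comp
      (hw.atTop_div_const zero_lt_four)
  refine squeeze_zero' ?_ ?_ hdom <;>
    filter_upwards [hs, hw.eventually_gt_atTop 0,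
      hsw.eventually_le_const (u := 1 / 4) (by norm_num)] with t hst hwt hswt
  · have := Gamma_pos_of_pos hst
    positivity
  · rw [div_le_iff₀ (Gamma_pos_of_pos hst)]
    refine rpow_mul_exp_neg_le_mul_Gamma hst ?_
    rw [div_le_iff₀ hwt] at hswt
    linarith

end GammaEstimates

section LaplaceComparison

lemma rpow_mul_exp_neg_mul_le {a b c z : ℝ} (ha : 0 ≤ a) (hb : 0 < b) (hac : a ≤ c * b)
    (hbz : b ≤ z) : z ^ a * exp (-(c * z)) ≤ b ^ a * exp (-(c * b)) := by
  have hz : 0 < z := hb.trans_le hbz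
  have hratio : (z / b) ^ a ≤ exp (c * (z - b)) := by
    calc (z / b) ^ a ≤ exp (z / b - 1) ^ a := by
          gcongr
          linarith [add_one_le_exp (z / b - 1)]
      _ = exp (a * (z / b - 1)) := by rw [← exp_mul, mul_comm]
      _ ≤ exp (c * b * (z / b - 1)) := by
          have : 0 ≤ z / b - 1 := sub_nonneg.2 ((one_le_div hb).2 hbz)
          gcongr
      _ = exp (c * (z - b)) := by congr 1; field_simp
  calc z ^ a * exp (-(c * z)) = b ^ a * (z / b) ^ a * exp (-(c * z)) := by
        rw [← mul_rpow hb.le (by positivity), mul_div_cancel₀ _ hb.ne']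
    _ ≤ b ^ a * exp (c * (z - b)) * exp (-(c * z)) := by gcongr
    _ = b ^ a * exp (-(c * b)) := by rw [mul_assoc, ← exp_add]; ring_nf

lemma setIntegral_Ioi_rpow_mul_exp_neg_mul_le {f : ℝ → ℝ} {b p p₀ t t₀ : ℝ} (hb : 0 < b)
    (hf : ∀ z, b < z → 0 ≤ f z) (hp : p₀ ≤ p) (hpt : p - p₀ ≤ (t - t₀) * b)
    (hi : IntegrableOn (fun z ↦ z ^ p₀ * exp (-(t₀ * z)) * f z) (Ioi b)) :
    ∫ z in Ioi b, z ^ p * exp (-(t * z)) * f z ≤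
      b ^ (p - p₀) * exp (-((t - t₀) * b)) * ∫ z in Ioi b, z ^ p₀ * exp (-(t₀ * z)) * f z := by
  rw [← integral_const_mul]
  refine integral_mono_of_nonneg ?_ (hi.const_mul _) ?_
  all_goals filter_upwards [ae_restrict_mem measurableSet_Ioi] with z hz
  all_goals have hz0 : 0 < z := hb.trans hz
  all_goals have hfz := hf z hz
  · positivity
  · calc z ^ p * exp (-(t * z)) * f z
        = z ^ (p - p₀) * exp (-((t - t₀) * z)) * (z ^ p₀ * exp (-(t₀ * z)) * f z) := by
          rw [show z ^ p = z ^ (p - p₀) * z ^ p₀ by rw [← rpow_add hz0, sub_add_cancel],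
            show -(t * z) = -((t - t₀) * z) + -(t₀ * z) by ring, exp_add]
          ring
      _ ≤ _ := by
          gcongr ?_ * _
          exact rpow_mul_exp_neg_mul_le (sub_nonneg.2 hp) hb hpt (le_of_lt hz)

end LaplaceComparison

lemma setIntegral_Ioi_le_add {f : ℝ → ℝ} {a b : ℝ} (hab : a ≤ b) (hf : ∀ y, a < y → 0 ≤ f y) :
    ∫ y in Ioi a, f y ≤ (∫ y in Ioc a b, f y) + ∫ y in Ioi b, f y := by
  by_cases hi : IntegrableOn f (Ioi a)
  · rw [← setIntegral_union Ioc_disjoint_Ioi_same measurableSet_Ioi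
      (hi.mono_set Ioc_subset_Ioi_self) (hi.mono_set (Ioi_subset_Ioi hab)),
      Ioc_union_Ioi_eq_Ioi hab]
  · rw [integral_undef hi]
    exact add_nonneg (setIntegral_nonneg measurableSet_Ioc fun y hy ↦ hf y hy.1)
      (setIntegral_nonneg measurableSet_Ioi fun y hy ↦ hf y (hab.trans_lt hy))

lemma eventually_sub_le_sub_div {q : ℝ → ℝ} {X : ℝ} (hqt : Tendsto (fun t ↦ q t / t) atTop (𝓝 0))
    (hX : 0 < X) (s₀ t₀ : ℝ) : ∀ᶠ t in atTop, q t - s₀ ≤ (t - t₀) / X := by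
  have hsmall : Tendsto (fun t ↦ q t / t + (t₀ / X - s₀) * t⁻¹) atTop (𝓝 0) := by
    simpa using hqt.add (tendsto_inv_atTop_zero.const_mul (t₀ / X - s₀))
  filter_upwards [eventually_gt_atTop 0, hsmall.eventually_le_const (inv_pos.2 hX)] with t ht hle
  rw [← div_eq_mul_inv, ← add_div, div_le_iff₀ ht, inv_mul_eq_div] at hle
  rw [sub_div]
  linarith

section GammaIntegrand

variable {ℓ : ℝ → ℝ}

/-- The integrand of the Gamma integral at `s`, perturbed by the factor `ℓ (t / y)`. -/
noncomputable def gammaIntegrand (ℓ : ℝ → ℝ) (s t y : ℝ) : ℝ :=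
  y ^ (s - 1) * exp (-y) * ℓ (t / y)

lemma gammaIntegrand_nonneg (hpos : ∀ x, 0 < x → 0 < ℓ x) (s : ℝ) {t y : ℝ} (ht : 0 < t)
    (hy : 0 < y) : 0 ≤ gammaIntegrand ℓ s t y := by
  have := hpos (t / y) (by positivity)
  unfold gammaIntegrand
  positivity

lemma gammaIntegrand_mul {t z : ℝ} (s : ℝ) (ht : 0 < t) (hz : 0 < z) :
    gammaIntegrand ℓ s t (t * z) =
      t ^ (s - 1) * (z ^ (s - 1) * exp (-(t * z)) * ℓ z⁻¹) := by
  rw [gammaIntegrand, mul_rpow ht.le hz.le, div_mul_cancel_left₀ ht.ne']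
  ring

lemma setIntegral_gammaIntegrand {t b : ℝ} (s : ℝ) (ht : 0 < t) (hb : 0 ≤ b) :
    ∫ y in Ioi (t * b), gammaIntegrand ℓ s t y =
      t ^ s * ∫ z in Ioi b, z ^ (s - 1) * exp (-(t * z)) * ℓ z⁻¹ := by
  have hscale := integral_comp_mul_left_Ioi (gammaIntegrand ℓ s t) b ht
  rw [eq_inv_smul_iff₀ ht.ne', smul_eq_mul] at hscale
  rw [← hscale, setIntegral_congr_fun measurableSet_Ioi
    fun z hz ↦ gammaIntegrand_mul s ht (hb.trans_lt hz), integral_const_mul, ← mul_assoc,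
    rpow_sub_one ht.ne', mul_div_cancel₀ _ ht.ne']

lemma integrableOn_gammaIntegrand_iff {t b : ℝ} (s : ℝ) (ht : 0 < t) (hb : 0 ≤ b) :
    IntegrableOn (gammaIntegrand ℓ s t) (Ioi (t * b)) ↔
      IntegrableOn (fun z ↦ z ^ (s - 1) * exp (-(t * z)) * ℓ z⁻¹) (Ioi b) := by
  rw [← integrableOn_Ioi_comp_mul_left_iff _ _ ht, integrableOn_congr_fun
    (s := Ioi b) (fun z hz ↦ gammaIntegrand_mul s ht (hb.trans_lt hz)) measurableSet_Ioi]
  exact integrable_const_mul_iff (rpow_pos_of_pos ht _).ne'.isUnit _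

lemma aemeasurable_Ioo_of_integrableOn_gammaIntegrand {s t b : ℝ} (ht : 0 < t) (hb : 0 < b)
    (hi : IntegrableOn (gammaIntegrand ℓ s t) (Ioi b)) :
    AEMeasurable ℓ (volume.restrict (Ioo 0 (t / b))) := by
  have hdiv : AEMeasurable (fun y ↦ ℓ (t / y)) (volume.restrict (Ioi b)) := by
    have hweight : Measurable fun y : ℝ ↦ (y ^ (s - 1) * exp (-y))⁻¹ := by fun_prop
    refine (hweight.aemeasurable.mul hi.aemeasurable).congr ?_
    filter_upwards [ae_restrict_mem measurableSet_Ioi] with y hy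
    have hy0 : 0 < y := hb.trans hy
    exact inv_mul_cancel_left₀ (by positivity) _
  refine (hdiv.comp_quasiMeasurePreserving (quasiMeasurePreserving_const_div ht hb)).congr ?_
  exact .of_forall fun x ↦ by simp [div_div_cancel₀ ht.ne']

lemma aemeasurable_Ioi_of_frequently_integrableOn {s b : ℝ → ℝ} (hb : ∀ᶠ t in atTop, 0 < b t)
    (hbt : Tendsto (fun t ↦ b t / t) atTop (𝓝 0))
    (hi : ∃ᶠ t in atTop, IntegrableOn (gammaIntegrand ℓ (s t) t) (Ioi (b t))) :
    AEMeasurable ℓ (volume.restrict (Ioi 0)) := by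
  have hIoi : Ioi (0 : ℝ) = ⋃ n : ℕ, Ioo 0 (n : ℝ) := by
    ext x
    simpa using fun _ ↦ exists_nat_gt x
  rw [hIoi, aemeasurable_iUnion_iff]
  intro n
  obtain ⟨t, hit, ht, hbpos, hbn⟩ := (hi.and_eventually <| (eventually_gt_atTop 0).and <| hb.and <|
    hbt.eventually_lt_const (u := ((n : ℝ) + 1)⁻¹) (by positivity)).exists
  refine (aemeasurable_Ioo_of_integrableOn_gammaIntegrand ht hbpos hit).mono_set
    (Ioo_subset_Ioo_right ?_)
  rw [lt_inv_comm₀ (by positivity) (by positivity), inv_div] at hbn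
  linarith

lemma exists_setIntegral_gammaIntegrand_le (hpos : ∀ x, 0 < x → 0 < ℓ x) {b s₀ t₀ : ℝ}
    (hb : 0 < b) (ht₀ : 0 < t₀) (hi : IntegrableOn (gammaIntegrand ℓ s₀ t₀) (Ioi (t₀ * b))) :
    ∃ C, 0 ≤ C ∧ ∀ s t, 0 < t → s₀ ≤ s → s - s₀ ≤ (t - t₀) * b →
      ∫ y in Ioi (t * b), gammaIntegrand ℓ s t y ≤ C * ((t * b) ^ s * exp (-(t * b))) := by
  have hf (z : ℝ) (hz : b < z) : 0 ≤ ℓ z⁻¹ := (hpos _ (inv_pos.2 (hb.trans hz))).le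
  set I := ∫ z in Ioi b, z ^ (s₀ - 1) * exp (-(t₀ * z)) * ℓ z⁻¹
  have hI : 0 ≤ I := setIntegral_nonneg measurableSet_Ioi fun z hz ↦ by
    have := hf z hz
    have : 0 < z := hb.trans hz
    positivity
  refine ⟨b ^ (-s₀) * exp (t₀ * b) * I, by positivity, fun s t ht hs hst ↦ ?_⟩
  rw [setIntegral_gammaIntegrand s ht hb.le]
  calc t ^ s * ∫ z in Ioi b, z ^ (s - 1) * exp (-(t * z)) * ℓ z⁻¹
      ≤ t ^ s * (b ^ (s - 1 - (s₀ - 1)) * exp (-((t - t₀) * b)) * I) := by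
        gcongr
        exact setIntegral_Ioi_rpow_mul_exp_neg_mul_le hb hf (by linarith) (by linarith)
          ((integrableOn_gammaIntegrand_iff s₀ ht₀ hb.le).1 hi)
    _ = b ^ (-s₀) * exp (t₀ * b) * I * ((t * b) ^ s * exp (-(t * b))) := by
        rw [show s - 1 - (s₀ - 1) = -s₀ + s by ring, rpow_add hb, mul_rpow ht.le hb.le,
          show -((t - t₀) * b) = t₀ * b + -(t * b) by ring, exp_add]
        ring

section Potter

variable {K X : ℝ}

lemma gammaIntegrand_le_of_mem_Icc (hX : 0 < X)
    (hpotter : ∀ x, X ≤ x → ∀ z, x ≤ z → ℓ x ≤ K * (z / x) * ℓ z) {s t y : ℝ} (hs : 0 < s)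
    (ht : 0 < t) (hy : y ∈ Icc s (t / X)) :
    gammaIntegrand ℓ s t y ≤ K * ℓ (t / s) / s * (y ^ (s + 1 - 1) * exp (-y)) := by
  obtain ⟨hsy, hyX⟩ := hy
  have hy0 : 0 < y := hs.trans_le hsy
  have hbound := hpotter (t / y) ((le_div_comm₀ hy0 hX).1 hyX) (t / s) (by gcongr)
  rw [div_div_div_cancel_left' _ _ ht.ne'] at hbound
  calc gammaIntegrand ℓ s t y ≤ y ^ (s - 1) * exp (-y) * (K * (y / s) * ℓ (t / s)) := by
        unfold gammaIntegrand
        gcongr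
    _ = K * ℓ (t / s) / s * (y ^ (s + 1 - 1) * exp (-y)) := by
        rw [add_sub_right_comm, rpow_add_one hy0.ne']
        ring

lemma setIntegral_Ioc_gammaIntegrand_le (hpos : ∀ x, 0 < x → 0 < ℓ x) (hK : 0 ≤ K) (hX : 0 < X)
    (hpotter : ∀ x, X ≤ x → ∀ z, x ≤ z → ℓ x ≤ K * (z / x) * ℓ z) {A s t : ℝ} (hA : 1 ≤ A)
    (hs : 0 < s) (ht : 0 < t) :
    ∫ y in Ioc (A * s) (t / X), gammaIntegrand ℓ s t y ≤
      K * A * (A * exp (1 - A)) ^ s * (Gamma s * ℓ (t / s)) := by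
  have hA0 : 0 < A := by linarith
  have hℓs := hpos (t / s) (by positivity)
  have hi : IntegrableOn (fun y ↦ y ^ (s + 1 - 1) * exp (-y)) (Ioi (A * s)) := by
    simpa only [mul_comm] using (GammaIntegral_convergent (s := s + 1) (by positivity)).mono_set
      (Ioi_subset_Ioi (by positivity : 0 ≤ A * s))
  calc ∫ y in Ioc (A * s) (t / X), gammaIntegrand ℓ s t y
      ≤ ∫ y in Ioc (A * s) (t / X), K * ℓ (t / s) / s * (y ^ (s + 1 - 1) * exp (-y)) := by
        refine integral_mono_of_nonneg ?_ ((hi.mono_set Ioc_subset_Ioi_self).const_mul _) ?_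
        all_goals filter_upwards [ae_restrict_mem measurableSet_Ioc] with y hy
        · exact gammaIntegrand_nonneg hpos s ht (lt_trans (by positivity) hy.1)
        · exact gammaIntegrand_le_of_mem_Icc hX hpotter hs ht
            ⟨(le_mul_of_one_le_left hs.le hA).trans hy.1.le, hy.2⟩
    _ ≤ ∫ y in Ioi (A * s), K * ℓ (t / s) / s * (y ^ (s + 1 - 1) * exp (-y)) := by
        refine setIntegral_mono_set (hi.const_mul _) ?_ Ioc_subset_Ioi_self.eventuallyLE
        filter_upwards [ae_restrict_mem measurableSet_Ioi] with y hy
        have hy0 : 0 < y := lt_trans (by positivity) hy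
        dsimp
        positivity
    _ ≤ K * ℓ (t / s) / s *
          (exp (-((1 - 1 / A) * (A * s))) * ((1 / (1 / A)) ^ (s + 1) * Gamma (s + 1))) := by
        rw [integral_const_mul]
        gcongr
        exact setIntegral_Ioi_rpow_mul_exp_neg_le (by positivity) (by positivity) (by positivity)
          ((div_le_one hA0).2 hA)
    _ = K * A * (A * exp (1 - A)) ^ s * (Gamma s * ℓ (t / s)) := by
        rw [one_div_one_div, rpow_add_one hA0.ne', mul_rpow hA0.le (exp_pos _).le, ← exp_mul,
          Gamma_add_one hs.ne',
          show -((1 - 1 / A) * (A * s)) = (1 - A) * s by field_simp; ring]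
        field_simp

lemma tendsto_setIntegral_Ioc_gammaIntegrand_div (hpos : ∀ x, 0 < x → 0 < ℓ x) (hK : 0 ≤ K)
    (hX : 0 < X) (hpotter : ∀ x, X ≤ x → ∀ z, x ≤ z → ℓ x ≤ K * (z / x) * ℓ z) {q : ℝ → ℝ}
    (hq : Tendsto q atTop atTop) {A : ℝ} (hA : 1 < A) :
    Tendsto (fun t ↦ (∫ y in Ioc (A * q t) (t / X), gammaIntegrand ℓ (q t) t y) /
      (Gamma (q t) * ℓ (t / q t))) atTop (𝓝 0) := by
  have : 0 < A := by linarith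
  have hρ : A * exp (1 - A) < 1 := by
    rw [← neg_sub, exp_neg, ← div_eq_mul_inv, div_lt_one (exp_pos _)]
    linarith [add_one_lt_exp (sub_ne_zero.2 hA.ne')]
  have hdecay : Tendsto (fun t ↦ K * A * (A * exp (1 - A)) ^ q t) atTop (𝓝 0) := by
    have hρ0 : 0 < A * exp (1 - A) := by positivity
    simpa using ((tendsto_rpow_atTop_of_base_lt_one _ (by linarith) hρ).comp hq).const_mul (K * A)
  refine squeeze_zero' ?_ ?_ hdecay <;>
    filter_upwards [eventually_gt_atTop 0, hq.eventually_gt_atTop 0] with t ht hqt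
  all_goals
    have hdenom : 0 < Gamma (q t) * ℓ (t / q t) :=
      mul_pos (Gamma_pos_of_pos hqt) (hpos _ (by positivity))
  · refine div_nonneg (setIntegral_nonneg measurableSet_Ioc fun y hy ↦ ?_) hdenom.le
    exact gammaIntegrand_nonneg hpos _ ht (lt_trans (by positivity) hy.1)
  · rw [div_le_iff₀ hdenom]
    exact setIntegral_Ioc_gammaIntegrand_le hpos hK hX hpotter hA.le hqt ht

lemma rpow_mul_exp_neg_le_mul_Gamma_mul (hpos : ∀ x, 0 < x → 0 < ℓ x) (hX : 0 < X)
    (hpotter : ∀ x, X ≤ x → ∀ z, x ≤ z → ℓ x ≤ K * (z / x) * ℓ z) {s t : ℝ} (hs : 0 < s)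
    (hst : X ≤ t / s) :
    (t / X) ^ s * exp (-(t / X)) ≤
      K / ℓ X * ((t / X) ^ (s + 1) * exp (-(t / X)) / Gamma (s + 1)) * (Gamma s * ℓ (t / s)) := by
  have hw : 0 < t / X := div_pos ((div_pos_iff_of_pos_right hs).1 (hX.trans_le hst)) hX
  have := Gamma_pos_of_pos hs
  have hℓX := hpos X hX
  calc (t / X) ^ s * exp (-(t / X))
      ≤ (t / X) ^ s * exp (-(t / X)) * (K * (t / s / X) * ℓ (t / s) / ℓ X) :=
        le_mul_of_one_le_right (by positivity)
          ((one_le_div hℓX).2 (hpotter X le_rfl (t / s) hst))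
    _ = _ := by
        rw [rpow_add_one hw.ne', Gamma_add_one hs.ne']
        field_simp

lemma tendsto_setIntegral_Ioi_gammaIntegrand_div (hpos : ∀ x, 0 < x → 0 < ℓ x)
    (hX : 0 < X) (hpotter : ∀ x, X ≤ x → ∀ z, x ≤ z → ℓ x ≤ K * (z / x) * ℓ z) {q : ℝ → ℝ}
    (hq : Tendsto q atTop atTop) (hqt : Tendsto (fun t ↦ q t / t) atTop (𝓝 0)) {s₀ t₀ : ℝ}
    (ht₀ : 0 < t₀) (hi : IntegrableOn (gammaIntegrand ℓ s₀ t₀) (Ioi (t₀ / X))) :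
    Tendsto (fun t ↦ (∫ y in Ioi (t / X), gammaIntegrand ℓ (q t) t y) /
      (Gamma (q t) * ℓ (t / q t))) atTop (𝓝 0) := by
  simp only [div_eq_mul_inv _ X] at hi ⊢
  obtain ⟨C, hC, hle⟩ := exists_setIntegral_gammaIntegrand_le hpos (inv_pos.2 hX) ht₀ hi
  simp only [← div_eq_mul_inv _ X] at hle ⊢
  have hratio : Tendsto (fun t ↦ (q t + 1) / (t / X)) atTop (𝓝 0) := by
    have := (hqt.add tendsto_inv_atTop_zero).mul_const X
    rw [add_zero, zero_mul] at this
    exact this.congr fun t ↦ by rw [div_div_eq_mul_div]; ring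
  have hdecay := (tendsto_rpow_mul_exp_neg_div_Gamma
    ((hq.eventually_gt_atTop 0).mono fun t ht ↦ by positivity) (tendsto_id.atTop_div_const hX)
    hratio).const_mul (C * (K / ℓ X))
  rw [mul_zero] at hdecay
  refine squeeze_zero' ?_ ?_ hdecay <;>
    filter_upwards [eventually_gt_atTop 0, hq.eventually_gt_atTop 0, hq.eventually_ge_atTop s₀,
      eventually_sub_le_sub_div hqt hX s₀ t₀, eventually_sub_le_sub_div hqt hX 0 0]
      with t ht hqpos hs₀ hst₀ hqX
  all_goals
    have hdenom : 0 < Gamma (q t) * ℓ (t / q t) :=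
      mul_pos (Gamma_pos_of_pos hqpos) (hpos _ (by positivity))
  · refine div_nonneg (setIntegral_nonneg measurableSet_Ioi fun y hy ↦ ?_) hdenom.le
    exact gammaIntegrand_nonneg hpos _ ht (lt_trans (by positivity) hy)
  · rw [sub_zero, sub_zero, le_div_comm₀ hqpos hX] at hqX
    rw [div_le_iff₀ hdenom, mul_assoc C, mul_assoc C]
    exact (hle (q t) t ht hs₀ hst₀).trans (mul_le_mul_of_nonneg_left
      (rpow_mul_exp_neg_le_mul_Gamma_mul hpos hX hpotter hqpos hqX) hC)

end Potter

theorem tendsto_setIntegral_gammaIntegrand_div_of_frequently (hℓ : IsSlowlyVarying_s8 ℓ)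
    (hpos : ∀ x, 0 < x → 0 < ℓ x) {q : ℝ → ℝ} (hq : Tendsto q atTop atTop)
    (hqt : Tendsto (fun t ↦ q t / t) atTop (𝓝 0)) {A : ℝ} (hA : 1 < A)
    (hi : ∃ᶠ t in atTop, IntegrableOn (gammaIntegrand ℓ (q t) t) (Ioi (A * q t))) :
    Tendsto (fun t ↦ (∫ y in Ioi (A * q t), gammaIntegrand ℓ (q t) t y) /
      (Gamma (q t) * ℓ (t / q t))) atTop (𝓝 0) := by
  have : 0 < A := by linarith
  have hAq : Tendsto (fun t ↦ A * q t / t) atTop (𝓝 0) := by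
    simpa [mul_div_assoc] using hqt.const_mul A
  have hm : AEMeasurable ℓ (volume.restrict (Ioi 0)) := aemeasurable_Ioi_of_frequently_integrableOn
    ((hq.eventually_gt_atTop 0).mono fun t ht ↦ by positivity) hAq hi
  obtain ⟨X, hpotter, hX⟩ := ((eventually_forall_ge_atTop.2 (hℓ.eventually_forall_le_mul_rpow hpos
    hm one_lt_two one_pos)).and (eventually_gt_atTop 0)).exists
  simp only [rpow_one] at hpotter
  have hcut : ∀ᶠ t in atTop, A * q t ≤ t / X := by
    simpa using eventually_sub_le_sub_div hAq hX 0 0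
  obtain ⟨t₀, hi₀, hcut₀, ht₀⟩ := (hi.and_eventually (hcut.and (eventually_gt_atTop 0))).exists
  have hmain := tendsto_setIntegral_Ioc_gammaIntegrand_div hpos zero_le_two hX hpotter hq hA
  have hfar := tendsto_setIntegral_Ioi_gammaIntegrand_div hpos hX hpotter hq hqt ht₀
    (hi₀.mono_set (Ioi_subset_Ioi hcut₀))
  have hsum := hmain.add hfar
  rw [add_zero] at hsum
  refine squeeze_zero' ?_ ?_ hsum <;>
    filter_upwards [eventually_gt_atTop 0, hq.eventually_gt_atTop 0, hcut] with t ht hqpos hle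
  all_goals
    have hdenom : 0 ≤ Gamma (q t) * ℓ (t / q t) :=
      (mul_pos (Gamma_pos_of_pos hqpos) (hpos _ (by positivity))).le
    have hnonneg (y : ℝ) (hy : A * q t < y) : 0 ≤ gammaIntegrand ℓ (q t) t y :=
      gammaIntegrand_nonneg hpos _ ht (lt_trans (by positivity) hy)
  · exact div_nonneg (setIntegral_nonneg measurableSet_Ioi hnonneg) hdenom
  · rw [← add_div]
    exact div_le_div_of_nonneg_right (setIntegral_Ioi_le_add hle hnonneg) hdenom

end GammaIntegrand

theorem stmt_8_general (ℓ : ℝ → ℝ) (hℓpos : ∀ x, 0 < x → 0 < ℓ x) (hℓsv : IsSlowlyVarying_s8 ℓ)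
    (q : ℝ → ℝ) (hqtop : Tendsto q atTop atTop) (hqsmall : Tendsto (fun t ↦ q t / t) atTop (𝓝 0))
    (A : ℝ) (hA : 1 < A) :
    Tendsto (fun t ↦ (∫ y in Ioi (A * q t), y ^ (q t - 1) * exp (-y) * ℓ (t / y)) /
      (Gamma (q t) * ℓ (t / q t))) atTop (𝓝 0) := by
  by_cases hi : ∃ᶠ t in atTop, IntegrableOn (gammaIntegrand ℓ (q t) t) (Ioi (A * q t))
  · exact tendsto_setIntegral_gammaIntegrand_div_of_frequently hℓsv hℓpos hqtop hqsmall hA hi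
  · refine tendsto_const_nhds.congr' ?_
    filter_upwards [not_frequently.1 hi] with t ht
    exact (div_eq_zero_iff.2 (.inl (integral_undef ht))).symm

/-- Equation (3.3): for `ℓ` positive, locally bounded and slowly varying, `q` of class `𝒬`
and `A > 1`, the upper part of the integral is negligible:
`∫_{A q(t)}^∞ y^(q(t)-1) e^(-y) ℓ(t/y) dy / (Γ(q(t)) ℓ(t/q(t))) → 0` as `t → ∞`. -/
theorem stmt_8
    (ℓ : ℝ → ℝ)
    (hℓpos : ∀ x : ℝ, 0 < x → 0 < ℓ x)
    (hℓloc : ∀ a b : ℝ, 0 < a → BddAbove (ℓ '' Set.Icc a b))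
    (hℓsv : ∀ c : ℝ, 0 < c → Tendsto (fun t => ℓ (c * t) / ℓ t) atTop (nhds 1))
    (q : ℝ → ℝ)
    (hqpos : ∀ t : ℝ, 0 < t → 0 < q t)
    (hqtop : Tendsto q atTop atTop)
    (hqsmall : Tendsto (fun t => q t / t) atTop (nhds 0))
    (A : ℝ) (hA : 1 < A) :
    Tendsto (fun t =>
      (∫ y in Set.Ioi (A * q t), y ^ (q t - 1) * Real.exp (-y) * ℓ (t / y)) /
        (Real.Gamma (q t) * ℓ (t / q t))) atTop (nhds 0) :=
  stmt_8_general ℓ hℓpos hℓsv q hqtop hqsmall A hA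
end

section
/- For every real A > 1 and every real q > 0, ∫_A^∞ z^q e^{−q z} dz ≤ (A e^{−A})^q · A / ((A − 1) q). -/
open MeasureTheory Set Filter Real

/-!
By `1 + u ≤ exp u` at `u = z / a - 1`, the function `z ^ s` lies below the exponential
`a ^ s * exp (s * (z / a - 1))`, which is tangent to it at `z = a`. Multiplying by `exp (-(r * z))`
leaves an exponential that decays at rate `r - s / a`, and its integral over `(a, ∞)` is explicit.
-/

section IncompleteGamma

variable {a r s z : ℝ}

theorem rpow_le_rpow_mul_exp_div_sub_one (ha : 0 < a) (hz : 0 ≤ z) (hs : 0 ≤ s) :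
    z ^ s ≤ a ^ s * exp (s * (z / a - 1)) := by
  have hexp : z / a ≤ exp (z / a - 1) := by
    simpa only [sub_add_cancel] using add_one_le_exp (z / a - 1)
  calc
    z ^ s = a ^ s * (z / a) ^ s := by
      rw [← mul_rpow ha.le (by positivity), mul_div_cancel₀ z ha.ne']
    _ ≤ a ^ s * exp (z / a - 1) ^ s := by gcongr
    _ = a ^ s * exp (s * (z / a - 1)) := by rw [← exp_mul, mul_comm s]

theorem rpow_mul_exp_neg_mul_le_s10 (ha : 0 < a) (hz : 0 ≤ z) (hs : 0 ≤ s) :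
    z ^ s * exp (-(r * z)) ≤ a ^ s * exp (-s) * exp ((s / a - r) * z) := by
  calc
    z ^ s * exp (-(r * z)) ≤ a ^ s * exp (s * (z / a - 1)) * exp (-(r * z)) := by
      gcongr
      exact rpow_le_rpow_mul_exp_div_sub_one ha hz hs
    _ = a ^ s * exp (-s) * exp ((s / a - r) * z) := by
      rw [mul_assoc, mul_assoc, ← exp_add, ← exp_add]
      ring_nf

theorem integrableOn_Ioi_rpow_mul_exp_neg_mul (ha : 0 ≤ a) (hs : -1 < s) (hr : 0 < r) :
    IntegrableOn (fun z ↦ z ^ s * exp (-(r * z))) (Ioi a) := by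
  have hint := integrableOn_rpow_mul_exp_neg_mul_rpow hs one_pos hr
  simp only [rpow_one, neg_mul] at hint
  exact hint.mono_set (Ioi_subset_Ioi ha)

theorem integral_Ioi_rpow_mul_exp_neg_mul_le (ha : 0 < a) (hs : 0 ≤ s) (hsr : s / a < r) :
    ∫ z in Ioi a, z ^ s * exp (-(r * z)) ≤ a ^ s * exp (-(r * a)) / (r - s / a) := by
  have hr : 0 < r := (div_nonneg hs ha.le).trans_lt hsr
  have hrate : s / a - r < 0 := sub_neg.mpr hsr
  calc
    ∫ z in Ioi a, z ^ s * exp (-(r * z))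
      ≤ ∫ z in Ioi a, a ^ s * exp (-s) * exp ((s / a - r) * z) :=
        setIntegral_mono_on
          (integrableOn_Ioi_rpow_mul_exp_neg_mul ha.le (neg_one_lt_zero.trans_le hs) hr)
          ((integrableOn_exp_mul_Ioi hrate a).const_mul _) measurableSet_Ioi
          fun z hz ↦ rpow_mul_exp_neg_mul_le_s10 ha (ha.trans hz).le hs
    _ = a ^ s * exp (-s) * (exp ((s / a - r) * a) / (r - s / a)) := by
      rw [integral_const_mul, integral_exp_mul_Ioi hrate, neg_div, ← div_neg, neg_sub]
    _ = a ^ s * exp (-(r * a)) / (r - s / a) := by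
      rw [← mul_div_assoc, mul_assoc, ← exp_add, sub_mul, div_mul_cancel₀ s ha.ne']
      ring_nf

end IncompleteGamma

/-- Inequality (3.5): for every `A > 1` and `q > 0`,
`∫_A^∞ z^q e^(-qz) dz ≤ (A e^(-A))^q · A / ((A-1) q)`. -/
theorem stmt_10 (A q : ℝ) (hA : 1 < A) (hq : 0 < q) :
    (∫ z in Set.Ioi A, z ^ q * Real.exp (-(q * z))) ≤
      (A * Real.exp (-A)) ^ q * A / ((A - 1) * q) := by
  have hA₀ : 0 < A := one_pos.trans hA
  have hpow : (A * exp (-A)) ^ q = A ^ q * exp (-(q * A)) := by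
    rw [mul_rpow hA₀.le (exp_pos _).le, ← exp_mul, neg_mul, mul_comm A q]
  have hrate : q - q / A = (A - 1) * q / A := by
    field_simp
  calc
    ∫ z in Ioi A, z ^ q * exp (-(q * z)) ≤ A ^ q * exp (-(q * A)) / (q - q / A) :=
      integral_Ioi_rpow_mul_exp_neg_mul_le hA₀ hq.le (div_lt_self hq hA)
    _ = (A * exp (-A)) ^ q * A / ((A - 1) * q) := by
      rw [hpow, hrate, div_div_eq_mul_div]
end

section
/- Let q : (0,∞) → (0,∞) satisfy q(t) → ∞ as t → ∞, and fix constants a, A with 0 < a < 1 < A. Then, as t → ∞, ∫_{a q(t)}^{A q(t)} y^{q(t)−1} e^{−y} dy ∼ Γ(q(t)). -/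
open MeasureTheory Set Filter Real

/-!
Dividing by `Γ(s)` turns the integral into the probability that a gamma variable of shape `s` and
rate `1` lies in `(a s, A s]`. Multiplying the density of shape `s` by `x` gives `s` times the
density of shape `s + 1`, so the mean and the variance are both `s`. The window extends a distance
proportional to `s` on either side of the mean, so by Chebyshev's inequality the probability of
missing it is `O(1 / s)`.
-/

section

open ProbabilityTheory
open scoped Topology

section Chebyshev

variable {Ω : Type*} {mΩ : MeasurableSpace Ω} {μ : Measure Ω} [IsProbabilityMeasure μ]

theorem one_sub_variance_div_sq_le_measureReal_preimage_ball {X : Ω → ℝ} (hX : MemLp X 2 μ)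
    {c : ℝ} (hc : 0 < c) :
    1 - Var[X; μ] / c ^ 2 ≤ μ.real (X ⁻¹' Metric.ball μ[X] c) := by
  have chebyshev : μ.real {ω | c ≤ |X ω - μ[X]|} ≤ Var[X; μ] / c ^ 2 :=
    ENNReal.toReal_le_of_le_ofReal (div_nonneg (variance_nonneg X μ) (sq_nonneg c))
      (meas_ge_le_variance_div_sq hX hc)
  have compl_ball : (X ⁻¹' Metric.ball μ[X] c)ᶜ = {ω | c ≤ |X ω - μ[X]|} := by
    ext ω
    simp [Real.dist_eq]
  have one_le : 1 ≤ μ.real (X ⁻¹' Metric.ball μ[X] c) + μ.real (X ⁻¹' Metric.ball μ[X] c)ᶜ := by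
    simpa only [union_compl_self, probReal_univ] using
      measureReal_union_le (μ := μ) (X ⁻¹' Metric.ball μ[X] c) (X ⁻¹' Metric.ball μ[X] c)ᶜ
  rw [compl_ball] at one_le
  linarith

end Chebyshev

section GammaDistribution

variable {s r : ℝ}

theorem measurable_gammaPDF (s r : ℝ) : Measurable (gammaPDF s r) :=
  (measurable_gammaPDFReal s r).ennreal_ofReal

theorem measureReal_gammaMeasure (hs : 0 < s) (hr : 0 < r) {S : Set ℝ} (hS : MeasurableSet S) :
    (gammaMeasure s r).real S = ∫ x in S, gammaPDFReal s r x := by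
  rw [gammaMeasure, measureReal_def, withDensity_apply _ hS]
  exact (integral_eq_lintegral_of_nonneg_ae (ae_of_all _ (gammaPDFReal_nonneg hs hr))
    (by fun_prop)).symm

theorem integral_gammaMeasure (hs : 0 < s) (hr : 0 < r) (g : ℝ → ℝ) :
    ∫ x, g x ∂gammaMeasure s r = ∫ x, gammaPDFReal s r x * g x := by
  rw [gammaMeasure, integral_withDensity_eq_integral_toReal_smul
    (measurable_gammaPDF s r) (ae_of_all _ fun _ ↦ ENNReal.ofReal_lt_top)]
  simp only [gammaPDF, ENNReal.toReal_ofReal (gammaPDFReal_nonneg hs hr _), smul_eq_mul]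

theorem integrable_gammaMeasure_iff (hs : 0 < s) (hr : 0 < r) {g : ℝ → ℝ} :
    Integrable g (gammaMeasure s r) ↔ Integrable fun x ↦ gammaPDFReal s r x * g x := by
  rw [gammaMeasure, integrable_withDensity_iff_integrable_smul'
    (measurable_gammaPDF s r) (ae_of_all _ fun _ ↦ ENNReal.ofReal_lt_top)]
  simp only [gammaPDF, ENNReal.toReal_ofReal (gammaPDFReal_nonneg hs hr _), smul_eq_mul]

theorem gammaPDFReal_mul_self (hs : 0 < s) (hr : 0 < r) (x : ℝ) :
    gammaPDFReal s r x * x = s / r * gammaPDFReal (s + 1) r x := by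
  rcases lt_trichotomy x 0 with hx | rfl | hx
  · simp [gammaPDFReal, hx.not_ge]
  · simp [gammaPDFReal, hs.ne']
  · have rpow_x : x ^ s = x ^ (s - 1) * x := by rw [← rpow_add_one hx.ne', sub_add_cancel]
    have Gamma_ne : Gamma s ≠ 0 := (Gamma_pos_of_pos hs).ne'
    simp only [gammaPDFReal, hx.le, if_true, add_sub_cancel_right, rpow_add_one hr.ne',
      Gamma_add_one hs.ne', rpow_x]
    field_simp

theorem gammaPDFReal_mul_id_mul (hs : 0 < s) (hr : 0 < r) (g : ℝ → ℝ) (x : ℝ) :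
    gammaPDFReal s r x * (x * g x) = s / r * (gammaPDFReal (s + 1) r x * g x) := by
  rw [← mul_assoc, gammaPDFReal_mul_self hs hr, mul_assoc]

theorem integral_id_mul_gammaMeasure (hs : 0 < s) (hr : 0 < r) (g : ℝ → ℝ) :
    ∫ x, x * g x ∂gammaMeasure s r = s / r * ∫ x, g x ∂gammaMeasure (s + 1) r := by
  simp only [integral_gammaMeasure hs hr, integral_gammaMeasure (add_pos hs one_pos) hr,
    gammaPDFReal_mul_id_mul hs hr, integral_const_mul]

theorem integrable_id_mul_gammaMeasure_iff (hs : 0 < s) (hr : 0 < r) {g : ℝ → ℝ} :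
    Integrable (fun x ↦ x * g x) (gammaMeasure s r) ↔ Integrable g (gammaMeasure (s + 1) r) := by
  simp only [integrable_gammaMeasure_iff hs hr, integrable_gammaMeasure_iff (add_pos hs one_pos) hr,
    gammaPDFReal_mul_id_mul hs hr]
  exact integrable_const_mul_iff (div_pos hs hr).ne'.isUnit _

theorem integral_pow_succ_gammaMeasure (hs : 0 < s) (hr : 0 < r) (n : ℕ) :
    ∫ x, x ^ (n + 1) ∂gammaMeasure s r = s / r * ∫ x, x ^ n ∂gammaMeasure (s + 1) r := by
  simp only [pow_succ', integral_id_mul_gammaMeasure hs hr]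

theorem integrable_pow_gammaMeasure (hs : 0 < s) (hr : 0 < r) (n : ℕ) :
    Integrable (fun x ↦ x ^ n) (gammaMeasure s r) := by
  induction n generalizing s with
  | zero =>
    have := isProbabilityMeasure_gammaMeasure hs hr
    simp only [pow_zero, integrable_const]
  | succ n ih =>
    simpa only [pow_succ', integrable_id_mul_gammaMeasure_iff hs hr] using ih (add_pos hs one_pos)

theorem integral_id_gammaMeasure (hs : 0 < s) (hr : 0 < r) :
    ∫ x, x ∂gammaMeasure s r = s / r := by
  have := isProbabilityMeasure_gammaMeasure (add_pos hs one_pos) hr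
  simpa using integral_pow_succ_gammaMeasure hs hr 0

theorem memLp_id_two_gammaMeasure (hs : 0 < s) (hr : 0 < r) : MemLp id 2 (gammaMeasure s r) :=
  (memLp_two_iff_integrable_sq aestronglyMeasurable_id).2 (integrable_pow_gammaMeasure hs hr 2)

theorem variance_id_gammaMeasure (hs : 0 < s) (hr : 0 < r) :
    Var[id; gammaMeasure s r] = s / r ^ 2 := by
  have := isProbabilityMeasure_gammaMeasure hs hr
  have second_moment : ∫ x, x ^ 2 ∂gammaMeasure s r = s / r * ((s + 1) / r) := by
    simp only [integral_pow_succ_gammaMeasure hs hr 1, pow_one,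
      integral_id_gammaMeasure (add_pos hs one_pos) hr]
  simp only [variance_eq_sub (memLp_id_two_gammaMeasure hs hr), Pi.pow_apply, id_eq,
    second_moment, integral_id_gammaMeasure hs hr]
  ring

theorem one_sub_le_gammaMeasure_real_ball (hs : 0 < s) (hr : 0 < r) {c : ℝ} (hc : 0 < c) :
    1 - s / r ^ 2 / c ^ 2 ≤ (gammaMeasure s r).real (Metric.ball (s / r) c) := by
  have := isProbabilityMeasure_gammaMeasure hs hr
  simpa only [variance_id_gammaMeasure hs hr, id_eq, integral_id_gammaMeasure hs hr,
    preimage_id] using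
    one_sub_variance_div_sq_le_measureReal_preimage_ball (memLp_id_two_gammaMeasure hs hr) hc

theorem tendsto_gammaMeasure_real_ball (hr : 0 < r) {ε : ℝ} (hε : 0 < ε) :
    Tendsto (fun s ↦ (gammaMeasure s r).real (Metric.ball (s / r) (ε * s))) atTop (𝓝 1) := by
  have lower_bound_tendsto : Tendsto (fun s : ℝ ↦ 1 - (r * ε)⁻¹ ^ 2 * s⁻¹) atTop (𝓝 1) := by
    simpa only [mul_zero, sub_zero] using
      (tendsto_inv_atTop_zero.const_mul ((r * ε)⁻¹ ^ 2)).const_sub 1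
  refine tendsto_of_tendsto_of_tendsto_of_le_of_le' lower_bound_tendsto tendsto_const_nhds ?_ ?_
  · filter_upwards [eventually_gt_atTop 0] with s hs
    calc 1 - (r * ε)⁻¹ ^ 2 * s⁻¹ = 1 - s / r ^ 2 / (ε * s) ^ 2 := by field_simp
      _ ≤ (gammaMeasure s r).real (Metric.ball (s / r) (ε * s)) :=
        one_sub_le_gammaMeasure_real_ball hs hr (mul_pos hε hs)
  · filter_upwards [eventually_gt_atTop 0] with s hs
    have := isProbabilityMeasure_gammaMeasure hs hr
    exact measureReal_le_one

theorem tendsto_gammaMeasure_real_Ioc (hr : 0 < r) {a A : ℝ} (ha : a < r⁻¹) (hA : r⁻¹ < A) :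
    Tendsto (fun s ↦ (gammaMeasure s r).real (Ioc (a * s) (A * s))) atTop (𝓝 1) := by
  obtain ⟨ε, hε, haε, hAε⟩ : ∃ ε > 0, ε ≤ r⁻¹ - a ∧ ε ≤ A - r⁻¹ :=
    ⟨min (r⁻¹ - a) (A - r⁻¹), lt_min (sub_pos.2 ha) (sub_pos.2 hA), min_le_left _ _,
      min_le_right _ _⟩
  refine tendsto_of_tendsto_of_tendsto_of_le_of_le' (tendsto_gammaMeasure_real_ball hr hε)
    tendsto_const_nhds ?_ ?_
  · filter_upwards [eventually_gt_atTop 0] with s hs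
    have := isProbabilityMeasure_gammaMeasure hs hr
    have ball_subset : Metric.ball (s / r) (ε * s) ⊆ Ioc (a * s) (A * s) := by
      rw [Real.ball_eq_Ioo, div_eq_inv_mul, ← sub_mul, ← add_mul]
      exact Ioo_subset_Ioc_self.trans
        (Ioc_subset_Ioc (by gcongr; linarith) (by gcongr; linarith))
    exact measureReal_mono ball_subset
  · filter_upwards [eventually_gt_atTop 0] with s hs
    have := isProbabilityMeasure_gammaMeasure hs hr
    exact measureReal_le_one

theorem setIntegral_rpow_mul_exp_neg_div_Gamma (hs : 0 < s) {S : Set ℝ} (hS : MeasurableSet S)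
    (S_nonneg : S ⊆ Ici 0) :
    (∫ x in S, x ^ (s - 1) * exp (-x)) / Gamma s = (gammaMeasure s 1).real S := by
  rw [measureReal_gammaMeasure hs one_pos hS, ← integral_div]
  refine setIntegral_congr_fun hS fun x hx ↦ ?_
  simp only [gammaPDFReal, if_pos (mem_Ici.1 (S_nonneg hx)), one_rpow, one_mul]
  ring

theorem tendsto_setIntegral_Ioc_rpow_mul_exp_neg_div_Gamma {a A : ℝ} (ha : 0 ≤ a) (ha1 : a < 1)
    (hA : 1 < A) :
    Tendsto (fun s ↦ (∫ y in Ioc (a * s) (A * s), y ^ (s - 1) * exp (-y)) / Gamma s)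
      atTop (𝓝 1) := by
  refine (tendsto_gammaMeasure_real_Ioc one_pos (by rwa [inv_one]) (by rwa [inv_one])).congr' ?_
  filter_upwards [eventually_gt_atTop 0] with s hs
  have window_nonneg : Ioc (a * s) (A * s) ⊆ Ici 0 := fun y hy ↦ (mul_nonneg ha hs.le).trans hy.1.le
  exact (setIntegral_rpow_mul_exp_neg_div_Gamma hs measurableSet_Ioc window_nonneg).symm

end GammaDistribution

end

/-- If `q(t) → ∞` and `0 < a < 1 < A`, then
`∫_{a q(t)}^{A q(t)} y^(q(t)-1) e^(-y) dy ∼ Γ(q(t))` as `t → ∞`. -/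
theorem stmt_12
    (q : ℝ → ℝ) (hqpos : ∀ t : ℝ, 0 < t → 0 < q t)
    (hqtop : Tendsto q atTop atTop)
    (a A : ℝ) (ha : 0 < a) (ha1 : a < 1) (hA : 1 < A) :
    Tendsto (fun t =>
      (∫ y in Set.Ioc (a * q t) (A * q t), y ^ (q t - 1) * Real.exp (-y)) /
        Real.Gamma (q t)) atTop (nhds 1) :=
  (tendsto_setIntegral_Ioc_rpow_mul_exp_neg_div_Gamma ha.le ha1 hA).comp hqtop
end

section
/- Let (p_k)_{k≥1} be strictly positive reals with ∑_k p_k = 1 and counting function ρ*(x) = #{k : p_k ≥ x} satisfying ρ*(x) ∼ x^{−α} ℓ(1/x) as x ↓ 0 for some α ∈ (0,1] and some ℓ slowly varying at infinity. Let q : (0,∞) → ℕ be a function of class 𝒬. Consider the Poissonized Karlin occupancy scheme with frequencies (p_k) and set K_{≥r}(t) = ∑_k 1{Z_{t,k} ≥ r}. Then (q(t))^α K_{≥q(t)}(t) / (t^α ℓ(t/q(t))) → 1 in probability as t → ∞, i.e. for every ε > 0, P{ |(q(t))^α K_{≥q(t)}(t) / (t^α ℓ(t/q(t))) − 1| > ε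 } → 0. -/
open MeasureTheory Set Filter Real

/-!
Write `ν(s) = ρ*(1 / s)` and `s = t / q(t)`, so that `s ^ α ℓ(s) ∼ ν(s)` and a box of frequency
`p_k` receives a Poisson number of balls of mean `u q(t)`, where `u = p_k s`. For `u ≠ 1` the
Chernoff bound says that the count of the box lies on the wrong side of `q(t)` with probability at
most `(u e ^ (1 - u)) ^ q(t)`, which is exponentially small in `q(t)` on either side of `u = 1`.

Fix `a < 1 < b`. The boxes with `u ≥ b` number about `ν(s / b)`, which is of order `ν(s)`, so only
`o(ν(s))` of them are expected to hold fewer than `q(t)` balls. There may be infinitely many boxes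
with `u < a`, but since `ν(2s) ≤ 2 ^ m ν(s)` for large `s`, the sum of `u ^ (m + 1)` over those
boxes is `O(ν(s))` by a dyadic decomposition. Spending `m + 1` of the `q(t)` Chernoff factors on
this sum, again only `o(ν(s))` of them are expected to hold at least `q(t)` balls. By Markov's
inequality `K_{≥q(t)}(t)` lies, with probability tending to one, between `ν(s / b) - δ ν(s)` and
`ν(s / a) + δ ν(s)`; divide by `s ^ α ℓ(s)` and let `a, b → 1` and `δ → 0`. Only first moments
enter.
-/

open ProbabilityTheory Asymptotics

open scoped ENNReal Topology

section Poisson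

/-- The base `u * e ^ (1 - u)` of the Chernoff bound: its `r`-th power bounds the tail at level `r`
of a Poisson variable of mean `u * r`. -/
noncomputable def chernoffBase (u : ℝ) : ℝ := u * exp (1 - u)

lemma chernoffBase_nonneg {u : ℝ} (hu : 0 ≤ u) : 0 ≤ chernoffBase u :=
  mul_nonneg hu (exp_pos _).le

lemma chernoffBase_lt_one {u : ℝ} (hu : u ≠ 1) : chernoffBase u < 1 := by
  have h : u < exp (u - 1) := by linarith [add_one_lt_exp (sub_ne_zero.2 hu)]
  calc u * exp (1 - u) < exp (u - 1) * exp (1 - u) := by gcongr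
    _ = 1 := by rw [← exp_add]; simp

lemma chernoffBase_le_mul_exp_one {u : ℝ} (hu : 0 ≤ u) : chernoffBase u ≤ u * exp 1 := by
  unfold chernoffBase
  gcongr
  linarith

lemma hasDerivAt_chernoffBase (u : ℝ) :
    HasDerivAt chernoffBase ((1 - u) * exp (1 - u)) u :=
  ((hasDerivAt_id' u).mul ((hasDerivAt_id' u).const_sub 1).exp).congr_deriv (by ring)

lemma continuous_chernoffBase : Continuous chernoffBase := by
  unfold chernoffBase
  fun_prop

lemma monotoneOn_chernoffBase : MonotoneOn chernoffBase (Iic 1) := by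
  refine monotoneOn_of_hasDerivWithinAt_nonneg (convex_Iic 1) continuous_chernoffBase.continuousOn
    (fun u _ => (hasDerivAt_chernoffBase u).hasDerivWithinAt) fun u hu => ?_
  rw [interior_Iic, mem_Iio] at hu
  exact mul_nonneg (by linarith) (exp_pos _).le

lemma antitoneOn_chernoffBase : AntitoneOn chernoffBase (Ici 1) := by
  refine antitoneOn_of_hasDerivWithinAt_nonpos (convex_Ici 1) continuous_chernoffBase.continuousOn
    (fun u _ => (hasDerivAt_chernoffBase u).hasDerivWithinAt) fun u hu => ?_
  rw [interior_Ici, mem_Ioi] at hu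
  exact mul_nonpos_of_nonpos_of_nonneg (by linarith) (exp_pos _).le

lemma chernoffBase_pow_le {u a : ℝ} (hu : 0 ≤ u) (hua : u ≤ a) (ha : a ≤ 1) {m r : ℕ}
    (hmr : m ≤ r) :
    chernoffBase u ^ r ≤ exp 1 ^ m * chernoffBase a ^ (r - m) * u ^ m := by
  have hu0 := chernoffBase_nonneg hu
  calc chernoffBase u ^ r = chernoffBase u ^ m * chernoffBase u ^ (r - m) :=
        (pow_mul_pow_sub _ hmr).symm
    _ ≤ (u * exp 1) ^ m * chernoffBase a ^ (r - m) := by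
        gcongr
        · exact chernoffBase_le_mul_exp_one hu
        · exact monotoneOn_chernoffBase (hua.trans ha) ha hua
    _ = exp 1 ^ m * chernoffBase a ^ (r - m) * u ^ m := by ring

lemma poissonMeasure_singleton_le_chernoffBase_pow_mul {u : ℝ} (hu : 0 ≤ u) {r n : ℕ}
    (hn : u ^ n ≤ u ^ r) :
    poissonMeasure (u * r).toNNReal {n} ≤
      ENNReal.ofReal (chernoffBase u ^ r) * poissonMeasure r {n} := by
  have hbase : chernoffBase u ^ r * exp (-r) = u ^ r * exp (-(u * r)) := by
    rw [chernoffBase, mul_pow, ← exp_nat_mul, mul_assoc, ← exp_add]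
    congr 2
    ring
  rw [poissonMeasure_singleton, poissonMeasure_singleton, Real.coe_toNNReal _ (by positivity),
    NNReal.coe_natCast, ← ENNReal.ofReal_mul (pow_nonneg (chernoffBase_nonneg hu) r)]
  refine ENNReal.ofReal_le_ofReal ?_
  calc exp (-(u * r)) * (u * r) ^ n / n.factorial
      = exp (-(u * r)) * u ^ n * (r ^ n / n.factorial) := by rw [mul_pow]; ring
    _ ≤ exp (-(u * r)) * u ^ r * (r ^ n / n.factorial) := by gcongr
    _ = chernoffBase u ^ r * (exp (-r) * r ^ n / n.factorial) := by
      linear_combination (-(r : ℝ) ^ n / n.factorial) * hbase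

-- Change of measure from mean `u * r` to mean `r`, where the density is at most the Chernoff bound.
lemma poissonMeasure_le_chernoffBase_pow {u : ℝ} (hu : 0 ≤ u) {r : ℕ} {E : Set ℕ}
    (hE : ∀ n ∈ E, u ^ n ≤ u ^ r) :
    poissonMeasure (u * r).toNNReal E ≤ ENNReal.ofReal (chernoffBase u ^ r) := by
  set C := ENNReal.ofReal (chernoffBase u ^ r)
  calc poissonMeasure (u * r).toNNReal E
      = ∑' n, E.indicator (fun n => poissonMeasure (u * r).toNNReal {n}) n :=
        (Measure.tsum_indicator_apply_singleton _ E .of_discrete).symm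
    _ ≤ ∑' n, C * poissonMeasure r {n} := ENNReal.tsum_le_tsum <| indicator_le fun n hn =>
        poissonMeasure_singleton_le_chernoffBase_pow_mul hu (hE n hn)
    _ = C * poissonMeasure r univ := by
        rw [ENNReal.tsum_mul_left, ← Measure.tsum_indicator_apply_singleton _ univ .univ,
          indicator_univ]
    _ = C := by rw [measure_univ, mul_one]

lemma hasLaw_poissonMeasure_of_measure_eq {Ω : Type*} [MeasurableSpace Ω] {P : Measure Ω}
    {X : Ω → ℕ} (hX : AEMeasurable X P) {m : ℝ} (hm : 0 ≤ m)
    (h : ∀ n, P {ω | X ω = n} = ENNReal.ofReal (exp (-m) * m ^ n / n.factorial)) :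
    HasLaw X (poissonMeasure m.toNNReal) P where
  aemeasurable := hX
  map_eq := by
    refine Measure.ext_of_singleton fun n => ?_
    rw [Measure.map_apply_of_aemeasurable hX (.singleton n), poissonMeasure_singleton,
      Real.coe_toNNReal m hm]
    exact h n

section Tails

variable {Ω : Type*} [MeasurableSpace Ω] {P : Measure Ω} {X : Ω → ℕ} {u : ℝ} {r : ℕ}

lemma measure_le_le_chernoffBase_pow (hX : HasLaw X (poissonMeasure (u * r).toNNReal) P)
    (hu : 0 ≤ u) (hu1 : u ≤ 1) : P {ω | r ≤ X ω} ≤ ENNReal.ofReal (chernoffBase u ^ r) := by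
  rw [hX.measure_eq .of_discrete]
  exact poissonMeasure_le_chernoffBase_pow hu fun n hn => pow_le_pow_of_le_one hu hu1 hn

lemma measure_lt_le_chernoffBase_pow (hX : HasLaw X (poissonMeasure (u * r).toNNReal) P)
    (hu : 1 ≤ u) : P {ω | X ω < r} ≤ ENNReal.ofReal (chernoffBase u ^ r) := by
  rw [hX.measure_eq (p := (· < r)) .of_discrete]
  exact poissonMeasure_le_chernoffBase_pow (by linarith) fun n hn =>
    pow_le_pow_right₀ hu (le_of_lt hn)

end Tails

end Poisson

section RandomSet

variable {Ω ι : Type*} [MeasurableSpace Ω] {P : Measure Ω}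

lemma tsum_indicator_one_eq_encard (S : Set ι) :
    ∑' k, S.indicator (1 : ι → ℝ≥0∞) k = S.encard := by
  rw [← ENNReal.tsum_set_one, ← tsum_subtype]
  rfl

lemma lintegral_encard [Countable ι] {S : Ω → Set ι}
    (hS : ∀ k, NullMeasurableSet {ω | k ∈ S ω} P) :
    ∫⁻ ω, (S ω).encard ∂P = ∑' k, P {ω | k ∈ S ω} := by
  calc ∫⁻ ω, (S ω).encard ∂P
      = ∫⁻ ω, ∑' k, {ω | k ∈ S ω}.indicator 1 ω ∂P :=
        lintegral_congr fun ω => (tsum_indicator_one_eq_encard (S ω)).symm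
    _ = ∑' k, ∫⁻ ω, {ω | k ∈ S ω}.indicator 1 ω ∂P :=
        lintegral_tsum fun k => aemeasurable_one.indicator₀ (hS k)
    _ = ∑' k, P {ω | k ∈ S ω} := tsum_congr fun k => lintegral_indicator_one₀ (hS k)

lemma measure_le_encard_le [Countable ι] {S : Ω → Set ι}
    (hS : ∀ k, NullMeasurableSet {ω | k ∈ S ω} P) {a : ℝ≥0∞} (ha : a ≠ 0) (ha' : a ≠ ∞) :
    P {ω | a ≤ (S ω).encard} ≤ (∑' k, P {ω | k ∈ S ω}) / a := by
  rw [← lintegral_encard hS]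
  refine meas_ge_le_lintegral_div ?_ ha ha'
  simp only [← tsum_indicator_one_eq_encard]
  exact AEMeasurable.tsum fun k => aemeasurable_one.indicator₀ (hS k)

lemma finite_and_ncard_le_of_subset_union {A B C : Set ι} (hABC : A ⊆ B ∪ C) (hB : B.Finite)
    {d : ℝ} (hC : (C.encard : ℝ≥0∞) < ENNReal.ofReal d) :
    A.Finite ∧ (A.ncard : ℝ) ≤ B.ncard + d := by
  have hCfin : C.Finite := by
    rw [← encard_ne_top_iff, ← ENat.toENNReal_ne_top]
    exact hC.ne_top
  have hCcard : (C.ncard : ℝ) ≤ d := by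
    rw [← hCfin.cast_ncard_eq, ENat.toENNReal_coe, ← ENNReal.ofReal_natCast] at hC
    exact ((ENNReal.ofReal_lt_ofReal_iff_of_nonneg (Nat.cast_nonneg _)).1 hC).le
  refine ⟨(hB.union hCfin).subset hABC, ?_⟩
  have hAcard : A.ncard ≤ B.ncard + C.ncard :=
    (ncard_le_ncard hABC (hB.union hCfin)).trans (ncard_union_le _ _)
  have : (A.ncard : ℝ) ≤ B.ncard + C.ncard := mod_cast hAcard
  linarith

end RandomSet

section RegularVariation

/-- `f` is regularly varying at infinity with index `α`; index `0` is slow variation. -/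
def IsRegularlyVarying (f : ℝ → ℝ) (α : ℝ) : Prop :=
  ∀ c, 0 < c → Tendsto (fun t => f (c * t) / f t) atTop (𝓝 (c ^ α))

namespace IsRegularlyVarying

variable {f g : ℝ → ℝ} {α β : ℝ}

lemma eventually_ne_zero (hf : IsRegularlyVarying f α) : ∀ᶠ t in atTop, f t ≠ 0 := by
  have h := hf 1 one_pos
  rw [one_rpow] at h
  filter_upwards [h.eventually_ne one_ne_zero] with t ht hft
  simp [hft] at ht

lemma rpow_mul (hf : IsRegularlyVarying f β) (α : ℝ) :
    IsRegularlyVarying (fun t => t ^ α * f t) (α + β) := by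
  intro c hc
  rw [rpow_add hc]
  refine ((hf c hc).const_mul (c ^ α)).congr' ?_
  filter_upwards [eventually_gt_atTop 0] with t ht
  have := (rpow_pos_of_pos ht α).ne'
  rw [mul_rpow hc.le ht.le]
  field_simp

lemma tendsto_div_of_isEquivalent (hg : IsRegularlyVarying g α) (hfg : f ~[atTop] g) {c : ℝ}
    (hc : 0 < c) : Tendsto (fun t => f (c * t) / g t) atTop (𝓝 (c ^ α)) := by
  have hscale : Tendsto (fun t : ℝ => c * t) atTop atTop := tendsto_id.const_mul_atTop hc
  have hfg' := ((isEquivalent_iff_tendsto_one hg.eventually_ne_zero).1 hfg).comp hscale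
  rw [← one_mul (c ^ α)]
  refine (hfg'.mul (hg c hc)).congr' ?_
  filter_upwards [hscale.eventually hg.eventually_ne_zero] with t ht
  simp only [Function.comp_apply, Pi.div_apply]
  field_simp

end IsRegularlyVarying

lemma eventually_abs_inv_rpow_sub_one_lt (α : ℝ) {ε : ℝ} (hε : 0 < ε) :
    ∀ᶠ c in 𝓝 (1 : ℝ), |c⁻¹ ^ α - 1| < ε := by
  have hcont : ContinuousAt (fun c : ℝ => c⁻¹ ^ α) 1 :=
    (continuousAt_inv₀ one_ne_zero).rpow_const (by simp)
  simpa [Real.dist_eq] using hcont.eventually (Metric.ball_mem_nhds _ hε)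

end RegularVariation

section Occupancy

variable {ι : Type*}

/-- The number `ρ*(1 / s)` of boxes of frequency at least `1 / s`, as a function of `s`. It is
meaningful for `s > 0` and takes the junk value `0` if there are infinitely many such boxes. -/
noncomputable def boxCount (p : ι → ℝ) (s : ℝ) : ℕ := {k | 1 ≤ p k * s}.ncard

/-- The number `K_{≥r}` of boxes with at least `r` balls, where `z k` is the number of balls in
box `k`. It takes the junk value `0` if there are infinitely many such boxes. -/
noncomputable def occupancyCount (z : ι → ℕ) (r : ℕ) : ℕ := {k | r ≤ z k}.ncard

section CountingFunction

variable {p : ι → ℝ}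

lemma setOf_le_mul_eq (p : ι → ℝ) {c : ℝ} (hc : 0 < c) (s : ℝ) :
    {k | c ≤ p k * s} = {k | 1 ≤ p k * (c⁻¹ * s)} := by
  ext k
  simp only [mem_ofPred_eq]
  rw [mul_left_comm, ← div_eq_inv_mul, one_le_div hc]

lemma finite_setOf_one_le_mul (hp : ∀ k, 0 ≤ p k) (h : ∀ᶠ s in atTop, boxCount p s ≠ 0) (s : ℝ) :
    {k | 1 ≤ p k * s}.Finite := by
  obtain ⟨s', hs', hss'⟩ := (h.and (eventually_ge_atTop s)).exists
  exact (finite_of_ncard_ne_zero hs').subset fun k (hk : 1 ≤ p k * s) =>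
    hk.trans (mul_le_mul_of_nonneg_left hss' (hp k))

lemma boxCount_two_pow_mul_le {D : ℕ} {s : ℝ} (hs : 0 ≤ s)
    (hD : ∀ s' ≥ s, boxCount p (2 * s') ≤ D * boxCount p s') (j : ℕ) :
    boxCount p (2 ^ j * s) ≤ D ^ j * boxCount p s := by
  induction j with
  | zero => simp
  | succ j ih =>
    have hj : s ≤ 2 ^ j * s := le_mul_of_one_le_left hs (one_le_pow₀ one_le_two)
    calc boxCount p (2 ^ (j + 1) * s) = boxCount p (2 * (2 ^ j * s)) := by ring_nf
      _ ≤ D * boxCount p (2 ^ j * s) := hD _ hj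
      _ ≤ D * (D ^ j * boxCount p s) := by gcongr
      _ = D ^ (j + 1) * boxCount p s := by ring

lemma inv_two_pow_mul_boxCount_le {m : ℕ} {s : ℝ} (hs : 0 ≤ s)
    (hD : ∀ s' ≥ s, boxCount p (2 * s') ≤ 2 ^ m * boxCount p s') (j : ℕ) :
    (2⁻¹ : ℝ≥0∞) ^ (j * (m + 1)) * boxCount p (2 ^ (j + 1) * s) ≤
      2 ^ m * boxCount p s * 2⁻¹ ^ j := by
  calc (2⁻¹ : ℝ≥0∞) ^ (j * (m + 1)) * boxCount p (2 ^ (j + 1) * s)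
      ≤ 2⁻¹ ^ (j * (m + 1)) * ((2 ^ m) ^ (j + 1) * boxCount p s) := by
        gcongr
        exact_mod_cast boxCount_two_pow_mul_le hs hD (j + 1)
    _ = (2⁻¹ * 2) ^ (j * m) * (2 ^ m * boxCount p s * 2⁻¹ ^ j) := by ring
    _ = 2 ^ m * boxCount p s * 2⁻¹ ^ j := by
        rw [ENNReal.inv_mul_cancel two_ne_zero ENNReal.ofNat_ne_top, one_pow, one_mul]

-- If `2 ^ (-(j + 1)) < x ≤ 2 ^ (-j)`, the single summand `j` already dominates.
lemma ofReal_pow_le_tsum_dyadic {x : ℝ} (hx : 0 ≤ x) (hx1 : x ≤ 1) (m : ℕ) :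
    ENNReal.ofReal (x ^ (m + 1)) ≤
      ∑' j : ℕ, 2⁻¹ ^ (j * (m + 1)) * {x : ℝ | 1 ≤ x * 2 ^ (j + 1)}.indicator 1 x := by
  rcases hx.eq_or_lt with rfl | hx0
  · simp
  obtain ⟨j, hj, hj'⟩ := exists_nat_pow_near_of_lt_one hx0 hx1 (y := (2⁻¹ : ℝ))
    (by norm_num) (by norm_num)
  have hmem : x ∈ {x : ℝ | 1 ≤ x * 2 ^ (j + 1)} := by
    rw [inv_pow, inv_lt_iff_one_lt_mul₀ (by positivity)] at hj
    exact hj.le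
  refine le_trans ?_ (ENNReal.le_tsum j)
  rw [indicator_of_mem hmem, Pi.one_apply, mul_one, pow_mul, ENNReal.ofReal_pow hx]
  gcongr
  calc ENNReal.ofReal x ≤ ENNReal.ofReal (2⁻¹ ^ j) := ENNReal.ofReal_le_ofReal hj'
    _ = 2⁻¹ ^ j := by
      rw [ENNReal.ofReal_pow (by norm_num), ENNReal.ofReal_inv_of_pos two_pos, ENNReal.ofReal_ofNat]

lemma tsum_indicator_pow_le_boxCount (hp : ∀ k, 0 ≤ p k) (hfin : ∀ s, {k | 1 ≤ p k * s}.Finite)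
    {m : ℕ} {s : ℝ} (hs : 0 ≤ s)
    (hD : ∀ s' ≥ s, boxCount p (2 * s') ≤ 2 ^ m * boxCount p s') :
    ∑' k, {k | p k * s < 1}.indicator (fun k => ENNReal.ofReal ((p k * s) ^ (m + 1))) k ≤
      2 ^ (m + 1) * boxCount p s := by
  have hpoint (k) : {k | p k * s < 1}.indicator (fun k => ENNReal.ofReal ((p k * s) ^ (m + 1))) k ≤
      ∑' j : ℕ, (2⁻¹ : ℝ≥0∞) ^ (j * (m + 1)) * {k | 1 ≤ p k * (2 ^ (j + 1) * s)}.indicator 1 k := by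
    rw [indicator_apply]
    split_ifs with hk
    swap
    · exact zero_le
    refine (ofReal_pow_le_tsum_dyadic (mul_nonneg (hp k) hs) (le_of_lt hk) m).trans_eq
      (tsum_congr fun j => ?_)
    have hassoc : p k * s * 2 ^ (j + 1) = p k * (2 ^ (j + 1) * s) := by ring
    simp only [indicator_apply, mem_ofPred_eq, hassoc, Pi.one_apply]
  calc ∑' k, {k | p k * s < 1}.indicator (fun k => ENNReal.ofReal ((p k * s) ^ (m + 1))) k
      ≤ ∑' k, ∑' j : ℕ,
          (2⁻¹ : ℝ≥0∞) ^ (j * (m + 1)) * {k | 1 ≤ p k * (2 ^ (j + 1) * s)}.indicator 1 k :=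
        ENNReal.tsum_le_tsum hpoint
    _ = ∑' j : ℕ, 2⁻¹ ^ (j * (m + 1)) * ({k | 1 ≤ p k * (2 ^ (j + 1) * s)}.encard : ℝ≥0∞) := by
        rw [ENNReal.tsum_comm]
        simp only [ENNReal.tsum_mul_left, tsum_indicator_one_eq_encard]
    _ = ∑' j : ℕ, 2⁻¹ ^ (j * (m + 1)) * (boxCount p (2 ^ (j + 1) * s) : ℝ≥0∞) := by
        simp only [← (hfin _).cast_ncard_eq, ENat.toENNReal_coe, boxCount]
    _ ≤ ∑' j : ℕ, (2 : ℝ≥0∞) ^ m * boxCount p s * 2⁻¹ ^ j :=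
        ENNReal.tsum_le_tsum (inv_two_pow_mul_boxCount_le hs hD)
    _ = 2 ^ (m + 1) * boxCount p s := by
        rw [ENNReal.tsum_mul_left, ENNReal.tsum_geometric_two]
        ring

variable {g : ℝ → ℝ} {α : ℝ}

lemma eventually_pos_of_isEquivalent_boxCount (hg : IsRegularlyVarying g α)
    (hν : (fun s => (boxCount p s : ℝ)) ~[atTop] g) : ∀ᶠ s in atTop, 0 < g s := by
  have h := (isEquivalent_iff_tendsto_one hg.eventually_ne_zero).1 hν
  filter_upwards [h.eventually_const_lt one_pos] with s hs
  exact lt_of_not_ge fun hgs => hs.not_ge (div_nonpos_of_nonneg_of_nonpos (Nat.cast_nonneg _) hgs)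

lemma eventually_boxCount_ne_zero (hg : IsRegularlyVarying g α)
    (hν : (fun s => (boxCount p s : ℝ)) ~[atTop] g) : ∀ᶠ s in atTop, boxCount p s ≠ 0 := by
  have h := (isEquivalent_iff_tendsto_one hg.eventually_ne_zero).1 hν
  filter_upwards [h.eventually_ne one_ne_zero] with s hs hs0
  simp [hs0] at hs

lemma exists_eventually_boxCount_two_mul_le (hg : IsRegularlyVarying g α)
    (hν : (fun s => (boxCount p s : ℝ)) ~[atTop] g) :
    ∃ m : ℕ, ∀ᶠ s in atTop, boxCount p (2 * s) ≤ 2 ^ m * boxCount p s := by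
  obtain ⟨m, hm⟩ := exists_nat_gt α
  have hlim := ((hg.tendsto_div_of_isEquivalent hν one_pos).const_mul (2 ^ m)).sub <|
    hg.tendsto_div_of_isEquivalent hν two_pos
  have hlim_pos : 0 < (2 : ℝ) ^ m * 1 ^ α - 2 ^ α := by
    rw [one_rpow, mul_one, ← rpow_natCast, sub_pos]
    exact rpow_lt_rpow_of_exponent_lt one_lt_two hm
  refine ⟨m, ?_⟩
  filter_upwards [hlim.eventually_const_lt hlim_pos,
    eventually_pos_of_isEquivalent_boxCount hg hν] with s hs hgs
  rw [one_mul, ← mul_div_assoc, ← sub_div, div_pos_iff_of_pos_right hgs, sub_pos] at hs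
  exact_mod_cast hs.le

lemma isEquivalent_boxCount_of_tendsto {ℓ : ℝ → ℝ} (hℓ : IsRegularlyVarying ℓ 0)
    (hρ : Tendsto (fun x => (Nat.card {k | x ≤ p k} : ℝ) / (x ^ (-α) * ℓ (1 / x))) (𝓝[>] 0) (𝓝 1)) :
    (fun s => (boxCount p s : ℝ)) ~[atTop] fun s => s ^ α * ℓ s := by
  rw [isEquivalent_iff_tendsto_one (hℓ.rpow_mul α).eventually_ne_zero]
  refine (hρ.comp tendsto_inv_atTop_nhdsGT_zero).congr' ?_
  filter_upwards [eventually_gt_atTop 0] with s hs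
  simp only [Function.comp_apply, Pi.div_apply, boxCount, Nat.card_coe_set_eq, one_div, inv_inv,
    inv_le_iff_one_le_mul₀ hs, inv_rpow hs.le, rpow_neg hs.le]

end CountingFunction

section MisplacedBoxes

/-- The boxes that hold at least `r` balls although their frequency is below `a / s`. -/
def lightOverfull (p : ι → ℝ) (s a : ℝ) (z : ι → ℕ) (r : ℕ) : Set ι :=
  {k | p k * s < a ∧ r ≤ z k}

/-- The boxes that hold fewer than `r` balls although their frequency is at least `b / s`. -/
def heavyUnderfull (p : ι → ℝ) (s b : ℝ) (z : ι → ℕ) (r : ℕ) : Set ι :=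
  {k | b ≤ p k * s ∧ z k < r}

variable {p : ι → ℝ} {s a b : ℝ} {r : ℕ}

lemma occupancyCount_mem_Icc (hfin : ∀ s, {k | 1 ≤ p k * s}.Finite) (ha : 0 < a) (hb : 0 < b)
    {z : ι → ℕ} {d : ℝ}
    (hlight : ((lightOverfull p s a z r).encard : ℝ≥0∞) < ENNReal.ofReal d)
    (hheavy : ((heavyUnderfull p s b z r).encard : ℝ≥0∞) < ENNReal.ofReal d) :
    (occupancyCount z r : ℝ) ∈
      Icc (boxCount p (b⁻¹ * s) - d : ℝ) (boxCount p (a⁻¹ * s) + d) := by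
  have hupper : {k | r ≤ z k} ⊆ {k | a ≤ p k * s} ∪ lightOverfull p s a z r := fun k hk =>
    (le_or_gt a (p k * s)).imp id fun hka => ⟨hka, hk⟩
  have hlower : {k | b ≤ p k * s} ⊆ {k | r ≤ z k} ∪ heavyUnderfull p s b z r := fun k hk =>
    (le_or_gt r (z k)).imp id fun hkr => ⟨hk, hkr⟩
  rw [setOf_le_mul_eq p ha] at hupper
  rw [setOf_le_mul_eq p hb] at hlower
  obtain ⟨hKfin, hKle⟩ := finite_and_ncard_le_of_subset_union hupper (hfin _) hlight
  obtain ⟨-, hKge⟩ := finite_and_ncard_le_of_subset_union hlower hKfin hheavy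
  exact ⟨sub_le_iff_le_add.2 hKge, hKle⟩

variable {Ω : Type*} [MeasurableSpace Ω] {P : Measure Ω} {Z : ι → Ω → ℕ} {m : ℕ}

lemma nullMeasurableSet_mem_lightOverfull (hZ : ∀ k, AEMeasurable (Z k) P) (k : ι) :
    NullMeasurableSet {ω | k ∈ lightOverfull p s a (Z · ω) r} P :=
  .inter (.const _) (nullMeasurableSet_le aemeasurable_const (hZ k))

lemma nullMeasurableSet_mem_heavyUnderfull (hZ : ∀ k, AEMeasurable (Z k) P) (k : ι) :
    NullMeasurableSet {ω | k ∈ heavyUnderfull p s b (Z · ω) r} P :=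
  .inter (.const _) (nullMeasurableSet_lt (hZ k) aemeasurable_const)

lemma tsum_measure_mem_lightOverfull_le (hp : ∀ k, 0 ≤ p k)
    (hfin : ∀ s, {k | 1 ≤ p k * s}.Finite) (hs : 0 ≤ s)
    (hD : ∀ s' ≥ s, boxCount p (2 * s') ≤ 2 ^ m * boxCount p s')
    (hZ : ∀ k, HasLaw (Z k) (poissonMeasure (p k * s * r).toNNReal) P)
    (ha : a ∈ Icc 0 1) (hmr : m < r) :
    ∑' k, P {ω | k ∈ lightOverfull p s a (Z · ω) r} ≤
      ENNReal.ofReal (exp 1 ^ (m + 1) * chernoffBase a ^ (r - (m + 1))) * 2 ^ (m + 1) *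
        boxCount p s := by
  set C := exp 1 ^ (m + 1) * chernoffBase a ^ (r - (m + 1))
  have hC : 0 ≤ C := mul_nonneg (by positivity) (pow_nonneg (chernoffBase_nonneg ha.1) _)
  have hpoint (k) : P {ω | k ∈ lightOverfull p s a (Z · ω) r} ≤ ENNReal.ofReal C *
      {k | p k * s < 1}.indicator (fun k => ENNReal.ofReal ((p k * s) ^ (m + 1))) k := by
    by_cases hk : p k * s < a
    · have hk0 : 0 ≤ p k * s := mul_nonneg (hp k) hs
      have hk1 : p k * s < 1 := hk.trans_le ha.2
      simp only [lightOverfull, mem_ofPred_eq, hk, true_and]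
      rw [indicator_of_mem (by exact hk1), ← ENNReal.ofReal_mul hC]
      exact (measure_le_le_chernoffBase_pow (hZ k) hk0 hk1.le).trans
        (ENNReal.ofReal_le_ofReal (chernoffBase_pow_le hk0 hk.le ha.2 hmr))
    · simp [lightOverfull, hk]
  calc ∑' k, P {ω | k ∈ lightOverfull p s a (Z · ω) r}
      ≤ ENNReal.ofReal C * ∑' k, {k | p k * s < 1}.indicator
          (fun k => ENNReal.ofReal ((p k * s) ^ (m + 1))) k := by
        rw [← ENNReal.tsum_mul_left]
        exact ENNReal.tsum_le_tsum hpoint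
    _ ≤ ENNReal.ofReal C * (2 ^ (m + 1) * boxCount p s) := by
        gcongr
        exact tsum_indicator_pow_le_boxCount hp hfin hs hD
    _ = ENNReal.ofReal C * 2 ^ (m + 1) * boxCount p s := (mul_assoc _ _ _).symm

lemma tsum_measure_mem_heavyUnderfull_le (hfin : ∀ s, {k | 1 ≤ p k * s}.Finite)
    (hZ : ∀ k, HasLaw (Z k) (poissonMeasure (p k * s * r).toNNReal) P) (hb : 1 ≤ b) :
    ∑' k, P {ω | k ∈ heavyUnderfull p s b (Z · ω) r} ≤
      ENNReal.ofReal (chernoffBase b ^ r) * boxCount p s := by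
  have hpoint (k) : P {ω | k ∈ heavyUnderfull p s b (Z · ω) r} ≤
      ENNReal.ofReal (chernoffBase b ^ r) * {k | 1 ≤ p k * s}.indicator 1 k := by
    by_cases hk : b ≤ p k * s
    · have hk1 : 1 ≤ p k * s := hb.trans hk
      have hk0 := chernoffBase_nonneg (zero_le_one.trans hk1)
      simp only [heavyUnderfull, mem_ofPred_eq, hk, true_and]
      rw [indicator_of_mem (by exact hk1), Pi.one_apply, mul_one]
      refine (measure_lt_le_chernoffBase_pow (hZ k) hk1).trans ?_
      gcongr
      exact antitoneOn_chernoffBase hb hk1 hk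
    · simp [heavyUnderfull, hk]
  refine (ENNReal.tsum_le_tsum hpoint).trans_eq ?_
  rw [ENNReal.tsum_mul_left, tsum_indicator_one_eq_encard, ← (hfin s).cast_ncard_eq,
    ENat.toENNReal_coe, boxCount]

lemma measure_ofReal_mul_natCast_le_encard_le [Countable ι] {S : Ω → Set ι}
    (hS : ∀ k, NullMeasurableSet {ω | k ∈ S ω} P) {C : ℝ≥0∞} {n : ℕ} (hn : n ≠ 0)
    (hC : ∑' k, P {ω | k ∈ S ω} ≤ C * n) {δ : ℝ} (hδ : 0 < δ) :
    P {ω | ENNReal.ofReal (δ * n) ≤ (S ω).encard} ≤ C / ENNReal.ofReal δ := by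
  have hδn : 0 < δ * n := by positivity
  calc P {ω | ENNReal.ofReal (δ * n) ≤ (S ω).encard}
      ≤ (∑' k, P {ω | k ∈ S ω}) / ENNReal.ofReal (δ * n) :=
        measure_le_encard_le hS (ENNReal.ofReal_pos.2 hδn).ne' ENNReal.ofReal_ne_top
    _ ≤ C * n / ENNReal.ofReal (δ * n) := by gcongr
    _ = C / ENNReal.ofReal δ := by
        rw [ENNReal.ofReal_mul hδ.le, ENNReal.ofReal_natCast]
        exact ENNReal.mul_div_mul_right C _ (by exact_mod_cast hn) (ENNReal.natCast_ne_top n)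

lemma measure_occupancyCount_notMem_Icc_le [Countable ι] (hp : ∀ k, 0 ≤ p k)
    (hfin : ∀ s, {k | 1 ≤ p k * s}.Finite) (hs : 0 ≤ s)
    (hD : ∀ s' ≥ s, boxCount p (2 * s') ≤ 2 ^ m * boxCount p s') (hν : boxCount p s ≠ 0)
    (hZ : ∀ k, HasLaw (Z k) (poissonMeasure (p k * s * r).toNNReal) P)
    (ha : a ∈ Ioc 0 1) (hb : 1 ≤ b) {δ : ℝ} (hδ : 0 < δ) (hmr : m < r) :
    P {ω | (occupancyCount (Z · ω) r : ℝ) ∉ Icc (boxCount p (b⁻¹ * s) - δ * boxCount p s : ℝ)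
        (boxCount p (a⁻¹ * s) + δ * boxCount p s)} ≤
      ENNReal.ofReal (exp 1 ^ (m + 1) * chernoffBase a ^ (r - (m + 1))) * 2 ^ (m + 1) /
          ENNReal.ofReal δ +
        ENNReal.ofReal (chernoffBase b ^ r) / ENNReal.ofReal δ := by
  have hZm (k) : AEMeasurable (Z k) P := (hZ k).aemeasurable
  have hlight := measure_ofReal_mul_natCast_le_encard_le (nullMeasurableSet_mem_lightOverfull hZm)
    hν (tsum_measure_mem_lightOverfull_le hp hfin hs hD hZ (Ioc_subset_Icc_self ha) hmr) hδ
  have hheavy := measure_ofReal_mul_natCast_le_encard_le (nullMeasurableSet_mem_heavyUnderfull hZm)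
    hν (tsum_measure_mem_heavyUnderfull_le hfin hZ hb) hδ
  refine (measure_mono fun ω hω => ?_).trans
    ((measure_union_le _ _).trans (add_le_add hlight hheavy))
  by_contra hgood
  rw [mem_union, not_or] at hgood
  exact hω (occupancyCount_mem_Icc hfin ha.1 (one_pos.trans_le hb) (not_le.1 hgood.1)
    (not_le.1 hgood.2))

end MisplacedBoxes

section Asymptotics

variable {p : ι → ℝ} {g : ℝ → ℝ} {α : ℝ}

lemma tendsto_chernoff_error {J : Type*} {l : Filter J} {r : J → ℕ} (hr : Tendsto r l atTop)
    {a b : ℝ} (ha : a ∈ Ico 0 1) (hb : 1 < b) (m : ℕ) {δ : ℝ} (hδ : 0 < δ) :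
    Tendsto (fun j =>
      ENNReal.ofReal (exp 1 ^ (m + 1) * chernoffBase a ^ (r j - (m + 1))) * 2 ^ (m + 1) /
          ENNReal.ofReal δ +
        ENNReal.ofReal (chernoffBase b ^ r j) / ENNReal.ofReal δ) l (𝓝 0) := by
  have hpow {u : ℝ} (hu0 : 0 ≤ u) (hu1 : u ≠ 1) :
      Tendsto (fun n => chernoffBase u ^ n) atTop (𝓝 0) :=
    tendsto_pow_atTop_nhds_zero_of_lt_one (chernoffBase_nonneg hu0) (chernoffBase_lt_one hu1)
  have hlight := ENNReal.tendsto_ofReal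
    (((hpow ha.1 ha.2.ne).comp ((tendsto_sub_atTop_nat (m + 1)).comp hr)).const_mul
      (exp 1 ^ (m + 1)))
  have hheavy := ENNReal.tendsto_ofReal ((hpow (by linarith) hb.ne').comp hr)
  have hδ0 : ENNReal.ofReal δ ≠ 0 := (ENNReal.ofReal_pos.2 hδ).ne'
  have h2 : (2 : ℝ≥0∞) ^ (m + 1) ≠ ∞ := by finiteness
  simpa [Function.comp_def] using
    (ENNReal.Tendsto.div_const (ENNReal.Tendsto.mul_const hlight (.inr h2)) (.inr hδ0)).add
      (ENNReal.Tendsto.div_const hheavy (.inr hδ0))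

lemma tendsto_measure_occupancyCount_notMem_Icc [Countable ι] {Ω : Type*} [MeasurableSpace Ω]
    {P : Measure Ω} (hp : ∀ k, 0 ≤ p k) (hg : IsRegularlyVarying g α)
    (hν : (fun s => (boxCount p s : ℝ)) ~[atTop] g)
    {J : Type*} {l : Filter J} {s : J → ℝ} (hs : Tendsto s l atTop)
    {r : J → ℕ} (hr : Tendsto r l atTop) {Z : J → ι → Ω → ℕ}
    (hZ : ∀ᶠ j in l, ∀ k, HasLaw (Z j k) (poissonMeasure (p k * s j * r j).toNNReal) P)
    {a b δ : ℝ} (ha : a ∈ Ioo 0 1) (hb : 1 < b) (hδ : 0 < δ) :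
    Tendsto (fun j => P {ω | (occupancyCount (Z j · ω) (r j) : ℝ) ∉
      Icc (boxCount p (b⁻¹ * s j) - δ * boxCount p (s j) : ℝ)
        (boxCount p (a⁻¹ * s j) + δ * boxCount p (s j))}) l (𝓝 0) := by
  have hν0 := eventually_boxCount_ne_zero hg hν
  obtain ⟨m, hm⟩ := exists_eventually_boxCount_two_mul_le hg hν
  refine tendsto_of_tendsto_of_tendsto_of_le_of_le' tendsto_const_nhds
    (tendsto_chernoff_error hr (Ioo_subset_Ico_self ha) hb m hδ) (.of_forall fun _ => zero_le) ?_
  filter_upwards [hZ, hs.eventually_ge_atTop 0, hs.eventually hν0,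
    hs.eventually (eventually_forall_ge_atTop.2 hm), hr.eventually_gt_atTop m]
    with j hZj hsj hνj hDj hmj
  exact measure_occupancyCount_notMem_Icc_le hp (finite_setOf_one_le_mul hp hν0) hsj hDj hνj hZj
    (Ioo_subset_Ioc_self ha) hb.le hδ hmj

lemma exists_eventually_Icc_subset (hg : IsRegularlyVarying g α)
    (hν : (fun s => (boxCount p s : ℝ)) ~[atTop] g) {ε : ℝ} (hε : 0 < ε) :
    ∃ a ∈ Ioo (0 : ℝ) 1, ∃ b > 1, ∃ δ > 0, ∀ᶠ s in atTop,
      ∀ x ∈ Icc (boxCount p (b⁻¹ * s) - δ * boxCount p s : ℝ)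
        (boxCount p (a⁻¹ * s) + δ * boxCount p s), |x / g s - 1| < ε := by
  have hnear := eventually_abs_inv_rpow_sub_one_lt α (half_pos hε)
  have hleft : ∀ᶠ a in 𝓝[<] (1 : ℝ), a ∈ Ioo 0 1 := Ioo_mem_nhdsLT one_pos
  have hright : ∀ᶠ b in 𝓝[>] (1 : ℝ), 1 < b := self_mem_nhdsWithin
  obtain ⟨a, ha, haε⟩ := (hleft.and (hnear.filter_mono nhdsWithin_le_nhds)).exists
  obtain ⟨b, hb, hbε⟩ := (hright.and (hnear.filter_mono nhdsWithin_le_nhds)).exists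
  rw [abs_lt] at haε hbε
  have hlim {c : ℝ} (hc : 0 < c) := hg.tendsto_div_of_isEquivalent hν hc
  have hlim_one := (hlim one_pos).const_mul (ε / 2)
  have hupper := ((hlim (inv_pos.2 ha.1)).add hlim_one).eventually_lt_const (u := 1 + ε)
    (by rw [one_rpow]; linarith)
  have hlower := ((hlim (inv_pos.2 (one_pos.trans hb))).sub hlim_one).eventually_const_lt
    (u := 1 - ε) (by rw [one_rpow]; linarith)
  refine ⟨a, ha, b, hb, ε / 2, half_pos hε, ?_⟩
  filter_upwards [hupper, hlower, eventually_pos_of_isEquivalent_boxCount hg hν]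
    with s hsupper hslower hgs x hx
  rw [one_mul, ← mul_div_assoc, ← add_div] at hsupper
  rw [one_mul, ← mul_div_assoc, ← sub_div] at hslower
  have hx_upper := div_le_div_of_nonneg_right hx.2 hgs.le
  have hx_lower := div_le_div_of_nonneg_right hx.1 hgs.le
  rw [abs_lt]
  constructor <;> linarith

theorem tendstoInMeasure_occupancyCount_div [Countable ι] {Ω : Type*} [MeasurableSpace Ω]
    {P : Measure Ω} (hp : ∀ k, 0 ≤ p k) (hg : IsRegularlyVarying g α)
    (hν : (fun s => (boxCount p s : ℝ)) ~[atTop] g)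
    {J : Type*} {l : Filter J} {s : J → ℝ} (hs : Tendsto s l atTop)
    {r : J → ℕ} (hr : Tendsto r l atTop) {Z : J → ι → Ω → ℕ}
    (hZ : ∀ᶠ j in l, ∀ k, HasLaw (Z j k) (poissonMeasure (p k * s j * r j).toNNReal) P) :
    TendstoInMeasure P (fun j ω => (occupancyCount (Z j · ω) (r j) : ℝ) / g (s j)) l
      fun _ => 1 := by
  rw [tendstoInMeasure_iff_norm]
  intro ε hε
  obtain ⟨a, ha, b, hb, δ, hδ, hwindow⟩ := exists_eventually_Icc_subset hg hν hε
  refine tendsto_of_tendsto_of_tendsto_of_le_of_le' tendsto_const_nhds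
    (tendsto_measure_occupancyCount_notMem_Icc hp hg hν hs hr hZ ha hb hδ)
    (.of_forall fun _ => zero_le) ?_
  filter_upwards [hs.eventually hwindow] with j hj
  exact measure_mono fun ω hω hmem => (hj _ hmem).not_ge hω

end Asymptotics

end Occupancy

lemma tendsto_div_atTop_of_tendsto_div_zero {f : ℝ → ℝ} (hf : ∀ᶠ t in atTop, 0 < f t)
    (hft : Tendsto (fun t => f t / t) atTop (𝓝 0)) : Tendsto (fun t => t / f t) atTop atTop := by
  have hpos : ∀ᶠ t in atTop, f t / t ∈ Ioi 0 := by
    filter_upwards [hf, eventually_gt_atTop 0] with t hft ht using div_pos hft ht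
  simpa [Function.comp_def] using
    tendsto_inv_nhdsGT_zero.comp (tendsto_nhdsWithin_iff.2 ⟨hft, hpos⟩)

lemma rpow_mul_div_rpow_mul {t u : ℝ} (hu : 0 < u) (ht : 0 < t) (α x y : ℝ) :
    u ^ α * x / (t ^ α * y) = x / ((t / u) ^ α * y) := by
  have := (rpow_pos_of_pos hu α).ne'
  rw [div_rpow ht.le hu.le]
  field_simp

theorem stmt_18_general
    {Ω ι : Type*} [MeasurableSpace Ω] [Countable ι] (P : Measure Ω)
    (p : ι → ℝ) (hp : ∀ k, 0 ≤ p k) (α : ℝ)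
    (ℓ : ℝ → ℝ) (hℓsv : ∀ c : ℝ, 0 < c → Tendsto (fun t => ℓ (c * t) / ℓ t) atTop (𝓝 1))
    (hρ : Tendsto (fun x => (Nat.card {k | x ≤ p k} : ℝ) / (x ^ (-α) * ℓ (1 / x))) (𝓝[>] 0) (𝓝 1))
    (q : ℝ → ℕ)
    (hqtop : Tendsto (fun t => (q t : ℝ)) atTop atTop)
    (hqsmall : Tendsto (fun t => (q t : ℝ) / t) atTop (𝓝 0))
    (Z : ℝ → ι → Ω → ℕ) (hZmeas : ∀ t k, AEMeasurable (Z t k) P)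
    (hZdist : ∀ t : ℝ, 0 < t → ∀ k n,
      P {ω | Z t k ω = n} =
        ENNReal.ofReal (exp (-(p k * t)) * (p k * t) ^ n / n.factorial)) :
    ∀ ε : ℝ, 0 < ε →
      Tendsto (fun t =>
          (P {ω | ε < |(q t : ℝ) ^ α *
              (Nat.card {k | q t ≤ Z t k ω} : ℝ) / (t ^ α * ℓ (t / q t)) - 1|}).toReal)
        atTop (𝓝 0) := by
  intro ε hε
  have hqpos : ∀ᶠ t in atTop, (0 : ℝ) < q t := hqtop.eventually_gt_atTop 0
  have hs := tendsto_div_atTop_of_tendsto_div_zero hqpos hqsmall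
  have hℓ : IsRegularlyVarying ℓ 0 := by simpa only [IsRegularlyVarying, rpow_zero] using hℓsv
  have hZ : ∀ᶠ t in atTop, ∀ k,
      HasLaw (Z t k) (poissonMeasure (p k * (t / q t) * q t).toNNReal) P := by
    filter_upwards [hqpos, eventually_gt_atTop 0] with t hqt ht k
    rw [mul_assoc, div_mul_cancel₀ t hqt.ne']
    exact hasLaw_poissonMeasure_of_measure_eq (hZmeas t k) (mul_nonneg (hp k) ht.le) (hZdist t ht k)
  have hlim := tendstoInMeasure_iff_norm.1 (tendstoInMeasure_occupancyCount_div hp (hℓ.rpow_mul α)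
    (isEquivalent_boxCount_of_tendsto hℓ hρ) hs (tendsto_natCast_atTop_iff.1 hqtop) hZ) ε hε
  refine (ENNReal.tendsto_toReal ENNReal.zero_ne_top).comp <|
    tendsto_of_tendsto_of_tendsto_of_le_of_le' tendsto_const_nhds hlim
      (.of_forall fun _ => zero_le) ?_
  filter_upwards [hqpos, eventually_gt_atTop 0] with t hqt ht
  refine measure_mono fun ω hω => ?_
  rw [mem_ofPred_eq, rpow_mul_div_rpow_mul hqt ht] at hω
  exact hω.le

/-- Proposition 5.3 (Poissonized version of Theorem 1.5, deterministic frequencies):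
if `ρ*(x) = #{k : p_k ≥ x} ∼ x^(-α) ℓ(1/x)` as `x ↓ 0` and `q : (0,∞) → ℕ` is of class `𝒬`,
then `q(t)^α K_{≥q(t)}(t) / (t^α ℓ(t/q(t))) → 1` in probability as `t → ∞`. -/
theorem stmt_18
    {Ω : Type*} [MeasurableSpace Ω] (P : Measure Ω) [IsProbabilityMeasure P]
    (p : ℕ → ℝ) (hp : ∀ k, 0 < p k) (hpsum : Summable p) (hp1 : ∑' k, p k = 1)
    (α : ℝ) (hα : α ∈ Set.Ioc (0:ℝ) 1)
    (ℓ : ℝ → ℝ) (hℓpos : ∀ x : ℝ, 0 < x → 0 < ℓ x)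
    (hℓsv : ∀ c : ℝ, 0 < c → Tendsto (fun t => ℓ (c * t) / ℓ t) atTop (nhds 1))
    (hρ : Tendsto (fun x => (Nat.card {k : ℕ | x ≤ p k} : ℝ) / (x ^ (-α) * ℓ (1 / x)))
      (nhdsWithin 0 (Set.Ioi 0)) (nhds 1))
    (q : ℝ → ℕ)
    (hqtop : Tendsto (fun t => (q t : ℝ)) atTop atTop)
    (hqsmall : Tendsto (fun t => (q t : ℝ) / t) atTop (nhds 0))
    -- the Poissonized occupancy scheme:
    (Z : ℝ → ℕ → Ω → ℕ) (hZmeas : ∀ t k, Measurable (Z t k))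
    (hZindep : ∀ t : ℝ, 0 < t →
      ProbabilityTheory.iIndepFun (fun k => Z t k) P)
    (hZdist : ∀ t : ℝ, 0 < t → ∀ k n,
      P {ω | Z t k ω = n} =
        ENNReal.ofReal (Real.exp (-(p k * t)) * (p k * t) ^ n / Nat.factorial n)) :
    ∀ ε : ℝ, 0 < ε →
      Tendsto (fun t =>
          (P {ω | ε < |(q t : ℝ) ^ α *
              (Nat.card {k : ℕ | q t ≤ Z t k ω} : ℝ) / (t ^ α * ℓ (t / q t)) - 1|}).toReal)
        atTop (nhds 0) :=
  stmt_18_general P p (fun k => (hp k).le) α ℓ hℓsv hρ q hqtop hqsmall Z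
    (fun t k => (hZmeas t k).aemeasurable) hZdist
end
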